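/- Suppose Ω ⊂⊂ ℂ^m is a bounded domain with Lipschitz boundary and p ∈ ∂Ω. Then at least one of the following two (not mutually exclusive) possibilities holds: (i) there exists a connected open set Ω′ with Ω ∪ {p} ⊂ Ω′ such that every function holomorphic on Ω is the restriction of a function holomorphic on Ω′ (i.e. p lies in the envelope of holomorphy of Ω); or (ii) p lies in a local peak set for plurisubharmonic functions: there exist an open neighborhood U of p and a continuous function ρ : U ∩ cl(Ω) → ℝ such that ρ < 0 on U ∩ Ω, ρ is plurisubharmonic on U ∩ Ω, and ρ(p) = 0. -/

import Mathlib

/-!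
For `z ∈ Ω` let `R z` be the extension radius of `Ω` at `z` (`extRadius`): the infimum over all
`f` holomorphic on `Ω` of the radius of convergence at `z` of the Taylor series of `f`, capped
at `1`. Two facts about `R` carry the argument. It is `1`-Lipschitz along segments in `Ω`
(`extRadius_sub_le`), by recentring power series. And `- log R` satisfies the sub-mean-value
inequality on complex discs (`neg_log_extRadius_le_circleAverage`): if `G` is entire with
`Re G > - log R` on the boundary circle, then `exp (-n G) • D^n f / n!` is bounded there uniformly
in `n`, hence also at the centre by the maximum principle, so `- log R ≤ Re G` at the centre; the
mean value property of `Re G` and the density of such real parts among the continuous functions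
on the circle give the inequality.

A Lipschitz boundary provides near `p` a unit vector `ν` with `ball (z - ε ν) (c ε) ⊆ Ω` for all
`z ∈ closure Ω` near `p` and all small `ε > 0` (`exists_coneAt`). If `R (p - ε ν) > ε` for some
small `ε`, the Taylor series at `p - ε ν` converge on a common ball containing `p`, and all
holomorphic functions extend (`ConeAt.exists_extension`).

Otherwise `R (p - ε ν) ≤ ε` for all small `ε`. With `ℓ = log (1 / ε)` put
`ρ z = sup_ε (- log R (z - ε ν) - ℓ - C) / ℓ`. The lower bound `R (z - ε ν) ≥ c' ε` makes every
term at most `- 1 / ℓ`, while at `p` the terms are at least `- C / ℓ`, so `ρ ≤ 0 = ρ p`. At a point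
of `Ω` the radius does not shrink with `ε`, so `ρ < 0`. The functions `z ↦ R (z - ε ν)` are
Lipschitz on the closure with a constant independent of `ε` (`ConeAt.extRadius_lipschitz`), which
gives continuity of `ρ` (`DepthFamily.continuousOn_peakFn`). The sub-mean-value property passes to
the supremum (`ConeAt.peakFn_le_circleAverage`), so `ρ` is the required peak function.
-/

open Metric

/-- A bounded domain `Ω ⊆ ℂ^m` has Lipschitz boundary: near each boundary point, after a
unitary (holomorphic rotation) change of coordinates `A` and a translation `b`, `Ω` coincides
locally with the subgraph `{z : Im z_i < r z}` of a Lipschitz function `r` which does not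
depend on the coordinate `Im z_i`. -/
def HasLipschitzBoundary {m : ℕ} (Ω : Set (EuclideanSpace ℂ (Fin m))) : Prop :=
  ∀ p ∈ frontier Ω,
    ∃ (A : EuclideanSpace ℂ (Fin m) ≃ₗᵢ[ℂ] EuclideanSpace ℂ (Fin m))
      (b : EuclideanSpace ℂ (Fin m)) (C : NNReal)
      (r : EuclideanSpace ℂ (Fin m) → ℝ) (i : Fin m)
      (W : Set (EuclideanSpace ℂ (Fin m))),
      IsOpen W ∧ p ∈ W ∧ LipschitzWith C r ∧
      (∀ z w : EuclideanSpace ℂ (Fin m),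
        (∀ j, j ≠ i → z j = w j) → (z i).re = (w i).re → r z = r w) ∧
      (∀ z ∈ W, z ∈ Ω ↔ ((A z + b) i).im < r (A z + b))

/-- `ρ` is plurisubharmonic on a set `W ⊆ ℂ^m`: it is upper semicontinuous on `W` and
satisfies the sub-mean-value property along every complex line at every point of `W`. -/
def PlurisubharmonicOn {m : ℕ} (ρ : EuclideanSpace ℂ (Fin m) → ℝ)
    (W : Set (EuclideanSpace ℂ (Fin m))) : Prop :=
  UpperSemicontinuousOn ρ W ∧
  ∀ a ∈ W, ∀ w : EuclideanSpace ℂ (Fin m), ∃ T > (0 : ℝ), ∀ t : ℝ, 0 < t → t < T →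
    ρ a ≤ (1 / (2 * Real.pi)) *
      ∫ θ in (0 : ℝ)..(2 * Real.pi),
        ρ (a + ((t : ℂ) * Complex.exp ((θ : ℂ) * Complex.I)) • w)

set_option linter.unusedSectionVars false

open Filter Topology

/-! ### Complex differentiable functions of several variables are smooth -/

section Osgood

variable {E F : Type} [NormedAddCommGroup E] [NormedSpace ℂ E]
  [NormedAddCommGroup F] [NormedSpace ℂ F]

/-- Cauchy's estimate for the Fréchet derivative, with no loss in the constant: restrict to
complex lines through `z`. -/
lemma norm_fderiv_le_of_closedBall {f : E → F} {U : Set E} (hU : IsOpen U)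
    (hf : DifferentiableOn ℂ f U) {z : E} {s M : ℝ} (hs : 0 < s) (hz : closedBall z s ⊆ U)
    (hM : ∀ y ∈ closedBall z s, ‖f y‖ ≤ M) : ‖fderiv ℂ f z‖ ≤ M / s := by
  have hM0 : 0 ≤ M := (norm_nonneg _).trans (hM z (mem_closedBall_self hs.le))
  have hzU : z ∈ U := hz (mem_closedBall_self hs.le)
  refine ContinuousLinearMap.opNorm_le_bound _ (by positivity) fun v => ?_
  rcases eq_or_ne v 0 with rfl | hv
  · simp
  have hv' : 0 < ‖v‖ := norm_pos_iff.2 hv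
  have hline : ∀ l : ℂ, l ∈ closedBall (0 : ℂ) (s / ‖v‖) → z + l • v ∈ closedBall z s := by
    intro l hl
    rw [mem_closedBall_zero_iff, le_div_iff₀ hv'] at hl
    simpa [norm_smul] using hl
  have hd : ∀ l : ℂ, HasDerivAt (fun l : ℂ => z + l • v) v l := fun l => by
    simpa using ((hasDerivAt_id l).smul_const v).const_add z
  have hdiff : DiffContOnCl ℂ (fun l : ℂ => f (z + l • v)) (ball 0 (s / ‖v‖)) := by
    apply DifferentiableOn.diffContOnCl
    rw [closure_ball _ (by positivity)]
    intro l hl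
    have h1 := hf.differentiableAt (hU.mem_nhds (hz (hline l hl)))
    exact (h1.comp l (hd l).differentiableAt).differentiableWithinAt
  have h2 := Complex.norm_deriv_le_of_forall_mem_sphere_norm_le (C := M) (by positivity) hdiff
    (fun l hl => hM _ (hline l (sphere_subset_closedBall hl)))
  have h3 : deriv (fun l : ℂ => f (z + l • v)) 0 = fderiv ℂ f z v := by
    have h1 : DifferentiableAt ℂ f (z + (0 : ℂ) • v) := by
      simpa using hf.differentiableAt (hU.mem_nhds hzU)
    simpa [Function.comp_def] using (h1.hasFDerivAt.comp_hasDerivAt 0 (hd 0)).deriv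
  rw [h3] at h2
  calc _ ≤ M / (s / ‖v‖) := h2
    _ = M / s * ‖v‖ := by field_simp

variable [FiniteDimensional ℂ E]

/-- A complex differentiable function has continuous derivative (the derivative is even locally
Lipschitz, by Cauchy's estimate applied to differences of translates). -/
lemma continuousOn_fderiv_of_differentiableOn {f : E → F} {U : Set E} (hU : IsOpen U)
    (hf : DifferentiableOn ℂ f U) : ContinuousOn (fderiv ℂ f) U := by
  have : ProperSpace E := FiniteDimensional.proper ℂ E
  intro z0 hz0
  apply ContinuousAt.continuousWithinAt
  obtain ⟨r4, hr4, hball⟩ := Metric.nhds_basis_closedBall.mem_iff.1 (hU.mem_nhds hz0)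
  obtain ⟨r, hr, rfl⟩ : ∃ r > 0, r4 = 4 * r := ⟨r4 / 4, by positivity, by ring⟩
  obtain ⟨M, hM⟩ := (isCompact_closedBall z0 (4 * r)).exists_bound_of_continuousOn
    (hf.continuousOn.mono hball)
  have hsub : ∀ y ∈ closedBall z0 (3 * r), closedBall y r ⊆ closedBall z0 (4 * r) := fun y hy =>
    closedBall_subset_closedBall' (by rw [mem_closedBall] at hy; linarith)
  have hM0 : 0 ≤ M := (norm_nonneg _).trans (hM z0 (mem_closedBall_self (by positivity)))
  have hfd : ∀ y ∈ closedBall z0 (3 * r), ‖fderiv ℂ f y‖ ≤ M / r := fun y hy =>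
    norm_fderiv_le_of_closedBall hU hf hr ((hsub y hy).trans hball) fun x hx => hM x (hsub y hy hx)
  have hlip : ∀ x ∈ closedBall z0 (3 * r), ∀ y ∈ closedBall z0 (3 * r),
      ‖f y - f x‖ ≤ M / r * ‖y - x‖ := fun x hx y hy =>
    Convex.norm_image_sub_le_of_norm_fderiv_le (𝕜 := ℂ)
      (fun w hw => hf.differentiableAt (hU.mem_nhds (hball
        (closedBall_subset_closedBall (by linarith) hw)))) hfd (convex_closedBall _ _) hx hy
  have key : ∀ z ∈ ball z0 r, ‖fderiv ℂ f z - fderiv ℂ f z0‖ ≤ M / r * ‖z - z0‖ / r := by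
    intro z hz
    set h := z0 - z with hh
    have hg : DifferentiableOn ℂ (fun y => f y - f (y + h)) (ball z (2 * r)) := by
      intro y hy
      have hyz : y ∈ closedBall z0 (4 * r) := by
        rw [mem_closedBall]; rw [mem_ball] at hy hz
        linarith [dist_triangle y z z0]
      have hyz' : y + h ∈ closedBall z0 (4 * r) := by
        rw [mem_closedBall]; rw [mem_ball] at hy
        have : dist (y + h) z0 = dist y z := by
          rw [dist_eq_norm, dist_eq_norm, hh]; congr 1; abel
        linarith
      refine DifferentiableAt.differentiableWithinAt ?_
      exact (hf.differentiableAt (hU.mem_nhds (hball hyz))).sub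
        ((hf.differentiableAt (hU.mem_nhds (hball hyz'))).comp y
          (differentiableAt_id.add_const h))
    have hest := norm_fderiv_le_of_closedBall (M := M / r * ‖z - z0‖) isOpen_ball hg hr
      (closedBall_subset_ball (by linarith)) (by
        intro y hy
        rw [mem_closedBall] at hy; rw [mem_ball] at hz
        have e : y - (y + h) = z - z0 := by rw [hh]; abel
        rw [← e]
        refine hlip _ ?_ _ ?_
        · rw [mem_closedBall]
          have : dist (y + h) z0 = dist y z := by
            rw [dist_eq_norm, dist_eq_norm, hh]; congr 1; abel
          linarith
        · rw [mem_closedBall]; linarith [dist_triangle y z z0])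
    have hz' : z ∈ U := hball (by rw [mem_closedBall]; rw [mem_ball] at hz; linarith)
    have e : fderiv ℂ (fun y => f y - f (y + h)) z = fderiv ℂ f z - fderiv ℂ f z0 := by
      have e0 : z + h = z0 := by rw [hh]; abel
      rw [fderiv_fun_sub (hf.differentiableAt (hU.mem_nhds hz')), fderiv_comp_add_right, e0]
      have : DifferentiableAt ℂ f (z + h) := by
        rw [e0]; exact hf.differentiableAt (hU.mem_nhds hz0)
      exact this.comp z (differentiableAt_id.add_const h)
    rwa [e] at hest
  rw [Metric.continuousAt_iff']
  intro ε hε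
  have ht : Tendsto (fun z => M / r * ‖z - z0‖ / r) (𝓝 z0) (𝓝 (M / r * ‖z0 - z0‖ / r)) := by
    apply Continuous.tendsto
    fun_prop
  simp only [sub_self, norm_zero, mul_zero, zero_div] at ht
  filter_upwards [ht.eventually_lt_const hε, ball_mem_nhds z0 hr] with z h1 h2
  rw [dist_eq_norm]
  exact (key z h2).trans_lt h1

variable [CompleteSpace F]

/-- A directional derivative of a complex differentiable function is complex differentiable:
write it as a Cauchy integral and differentiate under the integral sign. -/
lemma differentiableOn_fderiv_apply {f : E → F} {U : Set E} (hU : IsOpen U)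
    (hf : DifferentiableOn ℂ f U) (v : E) : DifferentiableOn ℂ (fun x => fderiv ℂ f x v) U := by
  have : ProperSpace E := FiniteDimensional.proper ℂ E
  have hfc := continuousOn_fderiv_of_differentiableOn hU hf
  intro z0 hz0
  apply DifferentiableAt.differentiableWithinAt
  obtain ⟨r2, hr2, hball⟩ := Metric.nhds_basis_closedBall.mem_iff.1 (hU.mem_nhds hz0)
  obtain ⟨r, hr, rfl⟩ : ∃ r > 0, r2 = 2 * r := ⟨r2 / 2, by positivity, by ring⟩
  obtain ⟨M, hM⟩ := (isCompact_closedBall z0 (2 * r)).exists_bound_of_continuousOn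
    (hfc.mono hball)
  set t : ℝ := r / (‖v‖ + 1) with ht
  have ht0 : 0 < t := by positivity
  have htv : t * ‖v‖ ≤ r := by
    rw [ht, div_mul_eq_mul_div, div_le_iff₀ (by positivity)]
    nlinarith [norm_nonneg v]
  have hmem : ∀ x ∈ ball z0 r, ∀ l ∈ closedBall (0 : ℂ) t, x + l • v ∈ closedBall z0 (2 * r) := by
    intro x hx l hl
    rw [mem_closedBall_zero_iff] at hl
    rw [mem_ball] at hx
    rw [mem_closedBall]
    have : dist (x + l • v) x ≤ r := by
      rw [dist_eq_norm, add_sub_cancel_left, norm_smul]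
      exact (mul_le_mul_of_nonneg_right hl (norm_nonneg _)).trans htv
    linarith [dist_triangle (x + l • v) x z0]
  have hcm : ∀ θ, circleMap 0 t θ ∈ closedBall (0 : ℂ) t := fun θ =>
    circleMap_mem_closedBall _ ht0.le _
  have hcm0 : ∀ θ, circleMap 0 t θ ≠ 0 := fun θ => circleMap_ne_center (ne_of_gt ht0)
  -- the kernel of the Cauchy integral in the angular variable
  set k : ℝ → ℂ := fun θ => deriv (circleMap 0 t) θ * ((circleMap 0 t θ - 0) ^ 2)⁻¹ with hk
  have hkc : Continuous k := by
    simp only [hk, deriv_circleMap, sub_zero]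
    refine Continuous.mul (by fun_prop) (Continuous.inv₀ (by fun_prop) fun θ => ?_)
    exact pow_ne_zero _ (hcm0 θ)
  have hcauchy : ∀ x ∈ ball z0 r, fderiv ℂ f x v =
      (2 * Real.pi * Complex.I : ℂ)⁻¹ •
        ∫ θ in (0 : ℝ)..2 * Real.pi, k θ • f (x + circleMap 0 t θ • v) := by
    intro x hx
    have hd : ∀ l : ℂ, HasDerivAt (fun l : ℂ => x + l • v) v l := fun l => by
      simpa using ((hasDerivAt_id l).smul_const v).const_add x
    have h1 := Complex.two_pi_I_inv_smul_circleIntegral_sub_sq_inv_smul_of_differentiable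
      (f := fun l : ℂ => f (x + l • v)) (U := (fun l : ℂ => x + l • v) ⁻¹' U) (c := 0) (w₀ := 0)
      (R := t) (hU.preimage (by fun_prop)) (fun l hl => hball (hmem x hx l hl))
      (fun l hl => ((hf.differentiableAt (hU.mem_nhds hl)).comp l
        (hd l).differentiableAt).differentiableWithinAt) (mem_ball_self ht0)
    have hxU : x ∈ U := hball (by simpa using hmem x hx 0 (mem_closedBall_self ht0.le))
    have h3 : deriv (fun l : ℂ => f (x + l • v)) 0 = fderiv ℂ f x v := by
      have h1 : DifferentiableAt ℂ f (x + (0 : ℂ) • v) := by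
        simpa using hf.differentiableAt (hU.mem_nhds hxU)
      simpa [Function.comp_def] using (h1.hasFDerivAt.comp_hasDerivAt 0 (hd 0)).deriv
    rw [← h3, ← h1, circleIntegral]
    simp only [hk, smul_smul]
  have hcont : ∀ x ∈ ball z0 r, Continuous fun θ => k θ • f (x + circleMap 0 t θ • v) := by
    intro x hx
    refine hkc.smul (hf.continuousOn.comp_continuous (by fun_prop) fun θ => ?_)
    exact hball (hmem x hx _ (hcm θ))
  have hcont' : Continuous fun θ => k θ • fderiv ℂ f (z0 + circleMap 0 t θ • v) := by
    refine hkc.smul (hfc.comp_continuous (by fun_prop) fun θ => ?_)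
    exact hball (hmem z0 (mem_ball_self hr) _ (hcm θ))
  have hint := intervalIntegral.hasFDerivAt_integral_of_dominated_of_fderiv_le (𝕜 := ℂ)
    (μ := MeasureTheory.volume) (a := 0) (b := 2 * Real.pi) (bound := fun θ => ‖k θ‖ * M)
    (F := fun x θ => k θ • f (x + circleMap 0 t θ • v))
    (F' := fun x θ => k θ • fderiv ℂ f (x + circleMap 0 t θ • v)) (x₀ := z0)
    (ball_mem_nhds z0 hr)
    (by
      filter_upwards [ball_mem_nhds z0 hr] with x hx
      exact (hcont x hx).aestronglyMeasurable)
    ((hcont z0 (mem_ball_self hr)).intervalIntegrable _ _)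
    hcont'.aestronglyMeasurable
    (Eventually.of_forall fun θ _ x hx => by
      rw [norm_smul]
      exact mul_le_mul_of_nonneg_left (hM _ (hmem x hx _ (hcm θ))) (norm_nonneg _))
    ((hkc.norm.mul continuous_const).intervalIntegrable _ _)
    (Eventually.of_forall fun θ _ x hx => by
      have h1 := (hf.differentiableAt (hU.mem_nhds (hball (hmem x hx _ (hcm θ))))).hasFDerivAt
      simpa [Function.comp_def, Pi.smul_def] using
        (h1.comp x ((hasFDerivAt_id x).add_const (circleMap 0 t θ • v))).const_smul (k θ))
  refine (hint.differentiableAt.const_smul (2 * Real.pi * Complex.I : ℂ)⁻¹).congr_of_eventuallyEq ?_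
  filter_upwards [ball_mem_nhds z0 hr] with x hx
  exact hcauchy x hx

/-- Complex differentiable functions on open subsets of a finite-dimensional space are smooth. -/
lemma contDiffOn_of_differentiableOn_complex (n : ℕ) : ∀ {f : E → F} {U : Set E}, IsOpen U →
    DifferentiableOn ℂ f U → ContDiffOn ℂ n f U := by
  induction n with
  | zero => intro f U _ hf; exact contDiffOn_zero.2 hf.continuousOn
  | succ n ih =>
    intro f U hU hf
    push_cast
    rw [contDiffOn_succ_iff_fderiv_apply hU.uniqueDiffOn]
    refine ⟨hf, fun h => by simp at h, fun y => ?_⟩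
    refine (ih hU (differentiableOn_fderiv_apply hU hf y)).congr fun x hx => ?_
    rw [fderivWithin_of_isOpen hU hx]

lemma differentiableOn_fderiv_complex {f : E → F} {U : Set E} (hU : IsOpen U)
    (hf : DifferentiableOn ℂ f U) : DifferentiableOn ℂ (fderiv ℂ f) U :=
  (((contDiffOn_succ_iff_fderiv_of_isOpen (n := 1) hU).1
    (by simpa [one_add_one_eq_two] using
      contDiffOn_of_differentiableOn_complex 2 hU hf)).2.2).differentiableOn (by simp)

end Osgood

/-! ### Taylor series of holomorphic functions -/

section Taylor

variable {E F : Type} [NormedAddCommGroup E] [NormedSpace ℂ E] [FiniteDimensional ℂ E]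
  [NormedAddCommGroup F] [NormedSpace ℂ F] [CompleteSpace F]

/-- Cauchy's estimates for higher derivatives: each derivative costs a distance `s`. -/
lemma norm_iteratedFDeriv_le_of_closedBall (n : ℕ) : ∀ {F : Type} [NormedAddCommGroup F]
    [NormedSpace ℂ F] [CompleteSpace F] {f : E → F} {U : Set E}, IsOpen U →
    DifferentiableOn ℂ f U → ∀ {w : E} {s M : ℝ}, 0 < s → closedBall w (n * s) ⊆ U →
    (∀ y ∈ closedBall w (n * s), ‖f y‖ ≤ M) → ‖iteratedFDeriv ℂ n f w‖ ≤ M / s ^ n := by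
  induction n with
  | zero =>
    intro F _ _ _ f U hU hf w s M hs hw hM
    simpa using hM w (by simp)
  | succ n ih =>
    intro F _ _ _ f U hU hf w s M hs hw hM
    rw [← norm_iteratedFDeriv_fderiv]
    have hsub : ∀ y ∈ closedBall w (n * s), closedBall y s ⊆ closedBall w ((n + 1 : ℕ) * s) := by
      intro y hy
      refine closedBall_subset_closedBall' ?_
      rw [mem_closedBall] at hy
      push_cast
      linarith
    have h1 := ih hU (differentiableOn_fderiv_complex hU hf) (w := w) (M := M / s) hs
      ((closedBall_subset_closedBall (by push_cast; nlinarith)).trans hw)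
      (fun y hy => norm_fderiv_le_of_closedBall hU hf hs ((hsub y hy).trans hw)
        fun x hx => hM x (hsub y hy hx))
    rw [div_div, ← pow_succ'] at h1
    exact h1

/-- The Taylor series of `f` at `z`. -/
noncomputable def taylorAt (f : E → F) (z : E) : FormalMultilinearSeries ℂ E F :=
  fun n => ((n.factorial : ℂ)⁻¹) • iteratedFDeriv ℂ n f z

lemma norm_taylorAt (f : E → F) (z : E) (n : ℕ) :
    ‖taylorAt f z n‖ = ‖iteratedFDeriv ℂ n f z‖ / n.factorial := by
  rw [taylorAt, norm_smul, norm_inv, Complex.norm_natCast, div_eq_inv_mul]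

/-- The Taylor series converges at least on a fixed proportion of any closed ball near which
`f` is holomorphic. The factor `exp 1` comes from `n ^ n / n! ≤ exp n`. -/
lemma radius_taylorAt_ge {f : E → F} {U : Set E} (hU : IsOpen U) (hf : DifferentiableOn ℂ f U)
    {z : E} {s : ℝ} (hs : 0 < s) (hz : closedBall z s ⊆ U) :
    ENNReal.ofReal (s / Real.exp 1) ≤ (taylorAt f z).radius := by
  have : ProperSpace E := FiniteDimensional.proper ℂ E
  obtain ⟨M, hM⟩ := (isCompact_closedBall z s).exists_bound_of_continuousOn
    (hf.continuousOn.mono hz)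
  have hM0 : 0 ≤ M := (norm_nonneg _).trans (hM z (mem_closedBall_self hs.le))
  refine FormalMultilinearSeries.le_radius_of_bound _ M fun n => ?_
  rw [Real.coe_toNNReal _ (by positivity), norm_taylorAt]
  rcases Nat.eq_zero_or_pos n with rfl | hn
  · simpa using hM z (mem_closedBall_self hs.le)
  have hn' : (0 : ℝ) < n := by exact_mod_cast hn
  have e : (n : ℝ) * (s / n) = s := by field_simp
  have h1 := norm_iteratedFDeriv_le_of_closedBall n hU hf (w := z) (s := s / n) (M := M)
    (by positivity) (by rwa [e]) (by rwa [e])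
  have h2 := Real.pow_div_factorial_le_exp (n : ℝ) hn'.le n
  have h3 : Real.exp (n : ℝ) = Real.exp 1 ^ n := by rw [← Real.exp_nat_mul, mul_one]
  rw [h3] at h2
  have hfac : (0 : ℝ) < n.factorial := by exact_mod_cast n.factorial_pos
  have hE : 0 < Real.exp 1 := Real.exp_pos 1
  calc ‖iteratedFDeriv ℂ n f z‖ / n.factorial * (s / Real.exp 1) ^ n
      ≤ M / (s / n) ^ n / n.factorial * (s / Real.exp 1) ^ n := by gcongr
    _ = M * ((n : ℝ) ^ n / n.factorial) / Real.exp 1 ^ n := by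
        rw [div_pow, div_pow]; field_simp
    _ ≤ M * (Real.exp 1 ^ n) / Real.exp 1 ^ n := by gcongr
    _ = M := by field_simp

lemma hasFPowerSeriesOnBall_taylorAt {f : E → F} {U : Set E} (hU : IsOpen U)
    (hf : DifferentiableOn ℂ f U) {z : E} {s : ℝ} (hs : 0 < s) (hz : closedBall z s ⊆ U) :
    HasFPowerSeriesOnBall f (taylorAt f z) z (ENNReal.ofReal (s / Real.exp 1)) := by
  refine ⟨radius_taylorAt_ge hU hf hs hz, by simp; positivity, fun {y} hy => ?_⟩
  have hy' : ‖y‖ < s := by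
    rw [Metric.eball_ofReal, mem_ball_zero_iff] at hy
    exact hy.trans_le (div_le_self hs.le (Real.one_le_exp zero_le_one))
  -- restrict to the complex line through `z` in direction `y`
  set V : Set E := (fun x => z + x) ⁻¹' U with hV
  have hVo : IsOpen V := hU.preimage (by fun_prop)
  have hg : DifferentiableOn ℂ (fun x => f (z + x)) V := fun x hx =>
    ((hf.differentiableAt (hU.mem_nhds hx)).comp x
      (differentiableAt_id.const_add z)).differentiableWithinAt
  have hzV : (0 : E) ∈ V := by
    simpa [hV] using hz (mem_closedBall_self hs.le)
  set L : ℂ →L[ℂ] E := ContinuousLinearMap.toSpanSingleton ℂ y with hL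
  have hLV : IsOpen (L ⁻¹' V) := hVo.preimage L.continuous
  have h0 : (0 : ℂ) ∈ L ⁻¹' V := by simpa using hzV
  have hder : ∀ n, iteratedDeriv n ((fun x => f (z + x)) ∘ L) 0 =
      iteratedFDeriv ℂ n f z fun _ => y := by
    intro n
    have h1 := L.iteratedFDerivWithin_comp_right (x := 0) (i := n)
      (contDiffOn_of_differentiableOn_complex n hVo hg) hVo.uniqueDiffOn hLV.uniqueDiffOn
      (by simpa using hzV) le_rfl
    rw [iteratedFDerivWithin_of_isOpen n hLV h0,
      iteratedFDerivWithin_of_isOpen n hVo (by simpa using hzV), map_zero,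
      iteratedFDeriv_comp_add_left, add_zero] at h1
    rw [iteratedDeriv_eq_iteratedFDeriv, h1]
    simp [hL]
  obtain ⟨R, hR1, hR⟩ : ∃ R > 1, R * ‖y‖ < s := by
    rcases eq_or_ne y 0 with rfl | hy0
    · exact ⟨2, by norm_num, by simpa using hs⟩
    · have hyp : 0 < ‖y‖ := norm_pos_iff.2 hy0
      obtain ⟨R, h1, h2⟩ := exists_between ((one_lt_div hyp).2 hy')
      exact ⟨R, h1, by rwa [lt_div_iff₀ hyp] at h2⟩
  have hdiff : DifferentiableOn ℂ ((fun x => f (z + x)) ∘ L) (ball 0 R) := by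
    intro l hl
    rw [mem_ball_zero_iff] at hl
    have : L l ∈ V := by
      refine hz ?_
      simp only [hL, ContinuousLinearMap.toSpanSingleton_apply, mem_closedBall, dist_self_add_left,
        norm_smul]
      exact ((mul_le_mul_of_nonneg_right hl.le (norm_nonneg y)).trans hR.le)
    exact ((hg.differentiableAt (hVo.mem_nhds this)).comp l
      L.differentiableAt).differentiableWithinAt
  have hsum := Complex.hasSum_taylorSeries_on_ball hdiff (z := 1) (by simpa using hR1)
  simp only [hder, sub_zero, one_pow, one_smul] at hsum
  simpa [hL, taylorAt] using hsum

/-- Complex differentiable functions on open subsets of a finite-dimensional space are analytic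
(Osgood). -/
lemma analyticOnNhd_of_differentiableOn {f : E → F} {U : Set E} (hU : IsOpen U)
    (hf : DifferentiableOn ℂ f U) : AnalyticOnNhd ℂ f U := by
  intro z hz
  obtain ⟨s, hs, hball⟩ := Metric.nhds_basis_closedBall.mem_iff.1 (hU.mem_nhds hz)
  exact (hasFPowerSeriesOnBall_taylorAt hU hf hs hball).analyticAt

lemma hasFPowerSeriesOnBall_taylorAt_sum {f : E → F} {z : E} (hr : 0 < (taylorAt f z).radius) :
    HasFPowerSeriesOnBall (fun y => (taylorAt f z).sum (y - z)) (taylorAt f z) z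
      (taylorAt f z).radius := by
  simpa using ((taylorAt f z).hasFPowerSeriesOnBall hr).comp_sub z

lemma taylorAt_sum_eventuallyEq {f : E → F} {U : Set E} (hU : IsOpen U)
    (hf : DifferentiableOn ℂ f U) {z : E} (hz : z ∈ U) :
    (fun y => (taylorAt f z).sum (y - z)) =ᶠ[𝓝 z] f := by
  obtain ⟨s, hs, hball⟩ := Metric.nhds_basis_closedBall.mem_iff.1 (hU.mem_nhds hz)
  have h := hasFPowerSeriesOnBall_taylorAt hU hf hs hball
  filter_upwards [Metric.eball_mem_nhds z h.r_pos] with y hy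
  exact (h.sum (by simpa [dist_eq_norm] using hy)).symm.trans (by simp)

/-- The Taylor coefficients are dominated by those of any power series representing the function
(the derivative is the symmetrization of the coefficient). -/
lemma norm_taylorAt_le {f : E → F} {z : E} {q : FormalMultilinearSeries ℂ E F} {r : ENNReal}
    (h : HasFPowerSeriesOnBall f q z r) (n : ℕ) : ‖taylorAt f z n‖ ≤ ‖q n‖ := by
  rw [norm_taylorAt, div_le_iff₀ (by exact_mod_cast n.factorial_pos)]
  refine ContinuousMultilinearMap.opNorm_le_bound (by positivity) fun v => ?_
  rw [h.iteratedFDeriv_eq_sum_of_completeSpace]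
  refine (norm_sum_le _ _).trans ?_
  have : ∀ σ ∈ (Finset.univ : Finset (Equiv.Perm (Fin n))),
      ‖q n fun i => v (σ i)‖ ≤ ‖q n‖ * ∏ i, ‖v i‖ := by
    intro σ _
    refine ((q n).le_opNorm _).trans_eq ?_
    rw [Equiv.prod_comp σ (fun i => ‖v i‖)]
  refine (Finset.sum_le_sum this).trans_eq ?_
  simp [Fintype.card_perm]
  ring

lemma taylorAt_congr {f g : E → F} {z : E} (h : f =ᶠ[𝓝 z] g) : taylorAt f z = taylorAt g z := by
  funext n
  rw [taylorAt, taylorAt, (h.iteratedFDeriv ℂ n).eq_of_nhds]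

/-- Uniform bound for recentred power series: the bound depends only on an upper bound `δ` for
the displacement. -/
lemma exists_norm_changeOrigin_le (q : FormalMultilinearSeries ℂ E F) {δ r : NNReal}
    (h : (δ : ENNReal) + r < q.radius) :
    ∃ M : ℝ, ∀ x : E, ‖x‖₊ ≤ δ → ∀ n, ‖q.changeOrigin x n‖ * (r : ℝ) ^ n ≤ M := by
  have hs := q.changeOriginSeries_summable_aux₁ h
  refine ⟨((∑' s : Σ k l : ℕ, { s : Finset (Fin (k + l)) // s.card = l },
      ‖q (s.1 + s.2.1)‖₊ * δ ^ s.2.1 * r ^ s.1 : NNReal) : ℝ), fun x hx n => ?_⟩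
  have hδ : (δ : ENNReal) < q.radius := (le_add_right le_rfl).trans_lt h
  have hx' : (‖x‖₊ : ENNReal) < q.radius := lt_of_le_of_lt (by exact_mod_cast hx) hδ
  have h1 := q.nnnorm_changeOrigin_le n hx'
  have h2 : ∑' s : Σ l : ℕ, { s : Finset (Fin (n + l)) // s.card = l },
      ‖q (n + s.1)‖₊ * ‖x‖₊ ^ s.1 ≤ ∑' s : Σ l : ℕ, { s : Finset (Fin (n + l)) // s.card = l },
      ‖q (n + s.1)‖₊ * δ ^ s.1 :=
    (q.changeOriginSeries_summable_aux₂ hx' n).tsum_le_tsum (fun s => by gcongr)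
      (q.changeOriginSeries_summable_aux₂ hδ n)
  have h3 := (NNReal.summable_sigma.1 hs).2.le_tsum n (fun _ _ => zero_le)
  rw [← NNReal.summable_sigma.1 hs |>.1 |> fun h' => hs.tsum_sigma' h'] at h3
  simp only [NNReal.tsum_mul_right] at h3
  have : ‖q.changeOrigin x n‖₊ * r ^ n ≤ ∑' s : Σ k l : ℕ,
      { s : Finset (Fin (k + l)) // s.card = l }, ‖q (s.1 + s.2.1)‖₊ * δ ^ s.2.1 * r ^ s.1 := by
    refine le_trans ?_ h3
    gcongr
    exact h1.trans h2
  exact_mod_cast this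

end Taylor

/-! ### Real parts of entire functions on the circle -/

section Approx

/-- Every continuous real function on the unit circle is a uniform limit of real parts of entire
functions: approximate by trigonometric polynomials and replace `e^{-ikθ}` by its conjugate. -/
lemma exists_differentiable_re_approx {V : ℂ → ℝ} (hV : ContinuousOn V (sphere 0 1)) {η : ℝ}
    (hη : 0 < η) :
    ∃ G : ℂ → ℂ, Differentiable ℂ G ∧ ∀ ζ ∈ sphere (0 : ℂ) 1, |(G ζ).re - V ζ| ≤ η := by
  have : Fact (0 < 2 * Real.pi) := ⟨Real.two_pi_pos⟩
  have hmem : ∀ c : Circle, (c : ℂ) ∈ sphere (0 : ℂ) 1 := fun c => by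
    simp [Circle.norm_coe]
  let v : C(AddCircle (2 * Real.pi), ℂ) :=
    ⟨fun x => (V (AddCircle.toCircle x) : ℂ), by
      refine Complex.continuous_ofReal.comp (hV.comp_continuous ?_ fun x => hmem _)
      exact continuous_subtype_val.comp AddCircle.continuous_toCircle⟩
  have hv : v ∈ closure ((Submodule.span ℂ (Set.range (@fourier (2 * Real.pi))) :
      Set C(AddCircle (2 * Real.pi), ℂ))) := by
    have := (span_fourier_closure_eq_top (T := 2 * Real.pi))
    have h2 : v ∈ (Submodule.span ℂ (Set.range (@fourier (2 * Real.pi)))).topologicalClosure := by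
      rw [this]; trivial
    exact h2
  obtain ⟨q, hq, hvq⟩ := Metric.mem_closure_iff.1 hv η hη
  -- split the trigonometric polynomial into a holomorphic and an antiholomorphic part
  have hsplit : ∃ g₁ g₂ : ℂ → ℂ, Differentiable ℂ g₁ ∧ Differentiable ℂ g₂ ∧
      ∀ x : AddCircle (2 * Real.pi), q x = g₁ (AddCircle.toCircle x) +
        (starRingEnd ℂ) (g₂ (AddCircle.toCircle x)) := by
    clear hvq
    induction hq using Submodule.span_induction with
    | mem q hq =>
      obtain ⟨n, rfl⟩ := hq
      rcases Int.eq_nat_or_neg n with ⟨k, rfl | rfl⟩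
      · refine ⟨fun z => z ^ k, fun _ => 0, by fun_prop, by fun_prop, fun x => ?_⟩
        simp [fourier_apply, AddCircle.toCircle_nsmul]
      · refine ⟨fun _ => 0, fun z => z ^ k, by fun_prop, by fun_prop, fun x => ?_⟩
        simp [fourier_apply, AddCircle.toCircle_nsmul, AddCircle.toCircle_neg, ← inv_pow,
          ← Circle.coe_inv_eq_conj]
    | zero => exact ⟨fun _ => 0, fun _ => 0, by fun_prop, by fun_prop, fun x => by simp⟩
    | add q₁ q₂ _ _ h₁ h₂ =>
      obtain ⟨a, b, ha, hb, hab⟩ := h₁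
      obtain ⟨c, d, hc, hd, hcd⟩ := h₂
      refine ⟨fun z => a z + c z, fun z => b z + d z, by fun_prop, by fun_prop, fun x => ?_⟩
      simp only [ContinuousMap.add_apply, hab, hcd, map_add]
      ring
    | smul l q _ h =>
      obtain ⟨a, b, ha, hb, hab⟩ := h
      refine ⟨fun z => l * a z, fun z => (starRingEnd ℂ) l * b z, by fun_prop, by fun_prop,
        fun x => ?_⟩
      simp only [ContinuousMap.smul_apply, hab, map_mul, smul_eq_mul, Complex.conj_conj]
      ring
  obtain ⟨g₁, g₂, h₁, h₂, h⟩ := hsplit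
  refine ⟨fun z => g₁ z + g₂ z, h₁.add h₂, fun ζ hζ => ?_⟩
  obtain ⟨x, hx⟩ := (AddCircle.homeomorphCircle Real.two_pi_pos.ne').surjective
    (⟨ζ, mem_sphere_zero_iff_norm.1 hζ |> fun h => by simpa [Submonoid.unitSphere] using h⟩ : Circle)
  rw [AddCircle.homeomorphCircle_apply] at hx
  have hx' : ((AddCircle.toCircle x : Circle) : ℂ) = ζ := by rw [hx]
  have h3 : ‖(q - v) x‖ ≤ ‖q - v‖ := (q - v).norm_coe_le_norm x
  have h4 : ‖q - v‖ < η := by rwa [← dist_eq_norm, dist_comm]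
  have h5 : ((q - v) x).re = (g₁ ζ + g₂ ζ).re - V ζ := by
    simp only [ContinuousMap.sub_apply, h, v, ContinuousMap.coe_mk, hx']
    simp
  rw [← h5]
  exact (Complex.abs_re_le_norm _).trans (h3.trans h4.le)

end Approx

/-! ### The extension radius -/

section ExtensionRadius

variable {E : Type} [NormedAddCommGroup E] [NormedSpace ℂ E] [FiniteDimensional ℂ E]

/-- The simultaneous extension radius of `Ω` at `z`, capped at `1`: the infimum of the radii of
convergence at `z` of the Taylor series of all functions holomorphic on `Ω`. The cap makes it a
real number; only radii close to `0` matter. -/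
noncomputable def extRadius (Ω : Set E) (z : E) : ℝ :=
  (min 1 (⨅ f : {f : E → ℂ // DifferentiableOn ℂ f Ω}, (taylorAt f.1 z).radius)).toReal

lemma extRadius_nonneg (Ω : Set E) (z : E) : 0 ≤ extRadius Ω z := ENNReal.toReal_nonneg

lemma ofReal_extRadius (Ω : Set E) (z : E) : ENNReal.ofReal (extRadius Ω z) =
    min 1 (⨅ f : {f : E → ℂ // DifferentiableOn ℂ f Ω}, (taylorAt f.1 z).radius) :=
  ENNReal.ofReal_toReal (ne_top_of_le_ne_top ENNReal.one_ne_top (min_le_left _ _))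

lemma extRadius_le_one (Ω : Set E) (z : E) : extRadius Ω z ≤ 1 := by
  rw [← ENNReal.ofReal_le_one, ofReal_extRadius]
  exact min_le_left _ _

lemma ofReal_extRadius_le {Ω : Set E} {f : E → ℂ} (hf : DifferentiableOn ℂ f Ω) (z : E) :
    ENNReal.ofReal (extRadius Ω z) ≤ (taylorAt f z).radius := by
  rw [ofReal_extRadius]
  exact (min_le_right _ _).trans
    (iInf_le (fun f : {f : E → ℂ // DifferentiableOn ℂ f Ω} => (taylorAt f.1 z).radius) ⟨f, hf⟩)

lemma le_extRadius {Ω : Set E} {z : E} {r : ℝ} (hr1 : r ≤ 1)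
    (h : ∀ f : E → ℂ, DifferentiableOn ℂ f Ω → ENNReal.ofReal r ≤ (taylorAt f z).radius) :
    r ≤ extRadius Ω z := by
  rw [← ENNReal.ofReal_le_ofReal_iff (extRadius_nonneg Ω z), ofReal_extRadius]
  exact le_min (ENNReal.ofReal_le_one.2 hr1) (le_iInf fun f => h f.1 f.2)

lemma le_extRadius_of_closedBall {Ω : Set E} (hΩ : IsOpen Ω) {z : E} {s : ℝ} (hs : 0 < s)
    (hs1 : s ≤ 1) (hz : closedBall z s ⊆ Ω) : s / Real.exp 1 ≤ extRadius Ω z :=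
  le_extRadius ((div_le_self hs.le (Real.one_le_exp zero_le_one)).trans hs1)
    fun _ hf => radius_taylorAt_ge hΩ hf hs hz

lemma extRadius_pos {Ω : Set E} (hΩ : IsOpen Ω) {z : E} (hz : z ∈ Ω) : 0 < extRadius Ω z := by
  obtain ⟨s, hs, hball⟩ := Metric.nhds_basis_closedBall.mem_iff.1 (hΩ.mem_nhds hz)
  have h := le_extRadius_of_closedBall hΩ (s := min s 1) (lt_min hs one_pos) (min_le_right _ _)
    ((closedBall_subset_closedBall (min_le_left _ _)).trans hball)
  have : 0 < min s 1 := lt_min hs one_pos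
  exact lt_of_lt_of_le (by positivity) h

/-- Unique continuation along a segment. -/
lemma eventuallyEq_of_segment {f g : E → ℂ} {V : Set E} (hV : IsOpen V) {z z' : E}
    (hf : AnalyticOnNhd ℂ f V) (hg : AnalyticOnNhd ℂ g V) (hseg : segment ℝ z z' ⊆ V)
    (h : f =ᶠ[𝓝 z] g) : f =ᶠ[𝓝 z'] g := by
  have hc : IsCompact (segment ℝ z z') := by
    rw [segment_eq_image_lineMap]
    exact isCompact_Icc.image (by fun_prop)
  obtain ⟨δ, hδ, hsub⟩ := hc.exists_thickening_subset_open hV hseg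
  have hmem : ∀ y ∈ segment ℝ z z', y ∈ thickening δ (segment ℝ z z') :=
    fun y hy => self_subset_thickening hδ _ hy
  have hE := (hf.mono hsub).eqOn_of_preconnected_of_eventuallyEq (hg.mono hsub)
    ((convex_segment z z').thickening δ).isPreconnected (hmem z (left_mem_segment ℝ z z')) h
  exact hE.eventuallyEq_of_mem
    (isOpen_thickening.mem_nhds (hmem z' (right_mem_segment ℝ z z')))

lemma analyticOnNhd_taylorAt_sum {f : E → ℂ} {z : E} {r : ℝ} (hr : 0 < r)
    (h : ENNReal.ofReal r ≤ (taylorAt f z).radius) :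
    AnalyticOnNhd ℂ (fun y => (taylorAt f z).sum (y - z)) (ball z r) := by
  have h1 := hasFPowerSeriesOnBall_taylorAt_sum (f := f) (z := z)
    ((ENNReal.ofReal_pos.2 hr).trans_le h)
  refine h1.analyticOnNhd.mono ?_
  rw [← Metric.eball_ofReal]
  exact Metric.eball_subset_eball h

lemma taylorAt_sum_eventuallyEq_of_segment {Ω : Set E} (hΩ : IsOpen Ω) {f : E → ℂ}
    (hf : DifferentiableOn ℂ f Ω) {z x y : E} {r : ℝ} (hr : 0 < r)
    (h : ENNReal.ofReal r ≤ (taylorAt f z).radius) (hseg : segment ℝ x y ⊆ Ω)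
    (hx : x ∈ ball z r) (hy : y ∈ ball z r)
    (hxe : (fun y => (taylorAt f z).sum (y - z)) =ᶠ[𝓝 x] f) :
    (fun y => (taylorAt f z).sum (y - z)) =ᶠ[𝓝 y] f :=
  eventuallyEq_of_segment (hΩ.inter isOpen_ball)
    ((analyticOnNhd_taylorAt_sum hr h).mono Set.inter_subset_right)
    ((analyticOnNhd_of_differentiableOn hΩ hf).mono Set.inter_subset_left)
    (Set.subset_inter hseg ((convex_ball z r).segment_subset hx hy)) hxe

/-- Taylor coefficients at a nearby point are dominated by those of the recentred series. -/
lemma norm_taylorAt_le_changeOrigin {Ω : Set E} (hΩ : IsOpen Ω) {f : E → ℂ}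
    (hf : DifferentiableOn ℂ f Ω) {z z' : E} {r : ℝ}
    (h : ENNReal.ofReal r ≤ (taylorAt f z).radius) (hseg : segment ℝ z z' ⊆ Ω)
    (hz' : ‖z' - z‖ < r) (n : ℕ) :
    ‖taylorAt f z' n‖ ≤ ‖(taylorAt f z).changeOrigin (z' - z) n‖ := by
  have hr : 0 < r := (norm_nonneg _).trans_lt hz'
  have hev := taylorAt_sum_eventuallyEq_of_segment hΩ hf hr h hseg (mem_ball_self hr)
    (by rwa [mem_ball, dist_eq_norm])
    (taylorAt_sum_eventuallyEq hΩ hf (hseg (left_mem_segment ℝ z z')))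
  have h1 := hasFPowerSeriesOnBall_taylorAt_sum (f := f) (z := z)
    ((ENNReal.ofReal_pos.2 hr).trans_le h)
  have h2 : (‖z' - z‖₊ : ENNReal) < (taylorAt f z).radius := by
    refine lt_of_lt_of_le ?_ h
    change ‖z' - z‖ₑ < _
    rw [← ofReal_norm]
    exact (ENNReal.ofReal_lt_ofReal_iff hr).2 hz'
  have h3 := h1.changeOrigin h2
  rw [add_sub_cancel] at h3
  rw [← taylorAt_congr hev]
  exact norm_taylorAt_le h3 n

/-- The extension radius is `1`-Lipschitz along segments inside `Ω`. -/
lemma extRadius_sub_le {Ω : Set E} (hΩ : IsOpen Ω) {z z' : E} (hseg : segment ℝ z z' ⊆ Ω) :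
    extRadius Ω z - ‖z' - z‖ ≤ extRadius Ω z' := by
  rcases le_or_gt (extRadius Ω z) ‖z' - z‖ with h | h
  · linarith [extRadius_nonneg Ω z']
  refine le_extRadius (by linarith [extRadius_le_one Ω z, norm_nonneg (z' - z)]) fun f hf => ?_
  have h1 := ofReal_extRadius_le hf z
  refine le_trans ?_ ((taylorAt f z).changeOrigin_radius (x := z' - z) |>.trans
    (FormalMultilinearSeries.radius_le_of_le
      (norm_taylorAt_le_changeOrigin hΩ hf h1 hseg h)))
  rw [ENNReal.ofReal_sub _ (norm_nonneg _)]
  gcongr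
  rw [ofReal_norm]; rfl

lemma continuousOn_extRadius {Ω : Set E} (hΩ : IsOpen Ω) : ContinuousOn (extRadius Ω) Ω := by
  intro z hz
  obtain ⟨s, hs, hball⟩ := Metric.isOpen_iff.1 hΩ z hz
  apply ContinuousAt.continuousWithinAt
  rw [Metric.continuousAt_iff]
  intro ε hε
  refine ⟨min s ε, lt_min hs hε, fun {y} hy => ?_⟩
  have hys : y ∈ ball z s := lt_of_lt_of_le hy (min_le_left _ _)
  have h1 := extRadius_sub_le hΩ (((convex_ball z s).segment_subset (mem_ball_self hs)
    hys).trans hball)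
  have h2 := extRadius_sub_le hΩ (((convex_ball z s).segment_subset hys
    (mem_ball_self hs)).trans hball)
  have h3 : ‖y - z‖ < ε := by
    rw [← dist_eq_norm]; exact lt_of_lt_of_le hy (min_le_right _ _)
  rw [norm_sub_rev] at h2
  rw [Real.dist_eq, abs_lt]
  constructor <;> linarith

/-- If `log R > - Re G` on a circle, where `R` is the extension radius and `G` is entire, then
`R ≥ exp (- Re G)` at its centre: apply the maximum principle to `exp (-n G) • D^n f / n!`. The
hypothesis on `G 0` accounts for the cap at `1`. -/
lemma exp_neg_re_le_extRadius {Ω : Set E} (hΩ : IsOpen Ω) {a w : E}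
    (hD : ∀ ζ : ℂ, ‖ζ‖ ≤ 1 → a + ζ • w ∈ Ω) {G : ℂ → ℂ} (hG : Differentiable ℂ G)
    (hG0 : 0 ≤ (G 0).re)
    (hlt : ∀ ζ ∈ sphere (0 : ℂ) 1, Real.exp (-(G ζ).re) < extRadius Ω (a + ζ • w)) :
    Real.exp (-(G 0).re) ≤ extRadius Ω a := by
  refine le_extRadius (by simpa using hG0) fun f hf => ?_
  -- a bound for the normalized Taylor coefficients that is uniform on the circle
  have hbound : ∃ M : ℝ, ∀ ζ ∈ sphere (0 : ℂ) 1, ∀ n,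
      ‖taylorAt f (a + ζ • w) n‖ * Real.exp (-(G ζ).re) ^ n ≤ M := by
    refine (isCompact_sphere (0 : ℂ) 1).induction_on
      (p := fun s => ∃ M : ℝ, ∀ ζ ∈ s, ∀ n,
        ‖taylorAt f (a + ζ • w) n‖ * Real.exp (-(G ζ).re) ^ n ≤ M) ?_ ?_ ?_ ?_
    · exact ⟨0, fun ζ h => by simp at h⟩
    · rintro s t hst ⟨M, hM⟩
      exact ⟨M, fun ζ h => hM ζ (hst h)⟩
    · rintro s t ⟨M, hM⟩ ⟨M', hM'⟩
      refine ⟨max M M', fun ζ h n => ?_⟩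
      rcases h with h | h
      · exact (hM ζ h n).trans (le_max_left _ _)
      · exact (hM' ζ h n).trans (le_max_right _ _)
    · intro ζ₀ hζ₀
      set z₀ := a + ζ₀ • w with hz₀
      have hz₀Ω : z₀ ∈ Ω := hD ζ₀ (by simpa using (mem_sphere_zero_iff_norm.1 hζ₀).le)
      obtain ⟨r, hr1, hr2⟩ := exists_between (hlt ζ₀ hζ₀)
      obtain ⟨ρ, hρ1, hρ2⟩ := exists_between hr2
      have hr0 : 0 < r := (Real.exp_pos _).trans hr1
      obtain ⟨s, hs, hball⟩ := Metric.isOpen_iff.1 hΩ z₀ hz₀Ω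
      have hrad := ofReal_extRadius_le hf z₀
      obtain ⟨M, hM⟩ := exists_norm_changeOrigin_le (taylorAt f z₀) (δ := (ρ - r).toNNReal)
        (r := r.toNNReal) (by
          refine lt_of_lt_of_le ?_ hrad
          rw [← ENNReal.coe_add, ← Real.toNNReal_add (by linarith) hr0.le, sub_add_cancel]
          exact (ENNReal.ofReal_lt_ofReal_iff (by linarith)).2 hρ2)
      have hc : Continuous fun ζ : ℂ => a + ζ • w := by fun_prop
      have hcG : Continuous fun ζ : ℂ => Real.exp (-(G ζ).re) :=
        Real.continuous_exp.comp (Complex.continuous_re.comp hG.continuous).neg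
      refine ⟨{ζ | a + ζ • w ∈ ball z₀ (min s (ρ - r)) ∧ Real.exp (-(G ζ).re) < r},
        mem_nhdsWithin_of_mem_nhds (Filter.inter_mem ?_ ?_), M, ?_⟩
      · exact hc.continuousAt.preimage_mem_nhds (ball_mem_nhds _ (lt_min hs (by linarith)))
      · exact hcG.continuousAt.preimage_mem_nhds (Iio_mem_nhds hr1)
      · rintro ζ ⟨h1, h2⟩ n
        have h1s : a + ζ • w ∈ ball z₀ s := ball_subset_ball (min_le_left _ _) h1
        have h1n : ‖a + ζ • w - z₀‖ < ρ - r := by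
          rw [← dist_eq_norm]; exact lt_of_lt_of_le h1 (min_le_right _ _)
        have h3 := norm_taylorAt_le_changeOrigin hΩ hf hrad
          (((convex_ball z₀ s).segment_subset (mem_ball_self hs) h1s).trans hball)
          (by linarith) n
        have h4 := hM (a + ζ • w - z₀) (by
          rw [← NNReal.coe_le_coe, coe_nnnorm, Real.coe_toNNReal _ (by linarith)]
          exact h1n.le) n
        rw [Real.coe_toNNReal _ hr0.le] at h4
        refine le_trans ?_ h4
        gcongr
  obtain ⟨M, hM⟩ := hbound
  have key : ∀ n, ‖taylorAt f a n‖ * Real.exp (-(G 0).re) ^ n ≤ M := by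
    intro n
    have hnorm : ∀ ζ, ‖Complex.exp (-(n * G ζ)) • taylorAt f (a + ζ • w) n‖ =
        ‖taylorAt f (a + ζ • w) n‖ * Real.exp (-(G ζ).re) ^ n := by
      intro ζ
      rw [norm_smul, Complex.norm_exp, mul_comm, ← Real.exp_nat_mul]
      simp
    have hdiff : DiffContOnCl ℂ
        (fun ζ : ℂ => Complex.exp (-(n * G ζ)) • taylorAt f (a + ζ • w) n) (ball 0 1) := by
      apply DifferentiableOn.diffContOnCl
      rw [closure_ball _ one_ne_zero]
      intro ζ hζ
      apply DifferentiableAt.differentiableWithinAt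
      have h1 : AnalyticAt ℂ (iteratedFDeriv ℂ n f) (a + ζ • w) :=
        (analyticOnNhd_of_differentiableOn hΩ hf).iteratedFDeriv n _ (hD ζ (by simpa using hζ))
      have h2 : DifferentiableAt ℂ (fun z => taylorAt f z n) (a + ζ • w) :=
        h1.differentiableAt.fun_const_smul ((n.factorial : ℂ)⁻¹)
      have h3 : DifferentiableAt ℂ (fun ζ : ℂ => a + ζ • w) ζ := by fun_prop
      have h4 : DifferentiableAt ℂ (fun ζ : ℂ => Complex.exp (-(n * G ζ))) ζ := by
        have := hG ζ
        fun_prop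
      have h5 : DifferentiableAt ℂ (fun ζ : ℂ => taylorAt f (a + ζ • w) n) ζ :=
        DifferentiableAt.comp (g := fun z => taylorAt f z n) ζ h2 h3
      exact h4.smul h5
    have h := Complex.norm_le_of_forall_mem_frontier_norm_le isBounded_ball hdiff (C := M)
      (fun ζ hζ => by
        rw [frontier_ball _ one_ne_zero] at hζ
        rw [hnorm]
        exact hM ζ hζ n) (subset_closure (mem_ball_self one_pos))
    rw [hnorm] at h
    simpa using h
  refine FormalMultilinearSeries.le_radius_of_bound _ M fun n => ?_
  rw [Real.coe_toNNReal _ (Real.exp_pos _).le]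
  exact key n

/-- `- log R` satisfies the sub-mean-value inequality on every closed complex disc in `Ω`. -/
lemma neg_log_extRadius_le_circleAverage {Ω : Set E} (hΩ : IsOpen Ω) {a w : E}
    (hD : ∀ ζ : ℂ, ‖ζ‖ ≤ 1 → a + ζ • w ∈ Ω) :
    -Real.log (extRadius Ω a) ≤
      Real.circleAverage (fun ζ => -Real.log (extRadius Ω (a + ζ • w))) 0 1 := by
  have hDs : ∀ ζ ∈ sphere (0 : ℂ) 1, a + ζ • w ∈ Ω := fun ζ hζ => hD ζ
    (mem_sphere_zero_iff_norm.1 hζ).le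
  have hVc : ContinuousOn (fun ζ => -Real.log (extRadius Ω (a + ζ • w))) (sphere (0 : ℂ) 1) := by
    refine ContinuousOn.neg (ContinuousOn.log ?_ fun ζ hζ => (extRadius_pos hΩ (hDs ζ hζ)).ne')
    exact (continuousOn_extRadius hΩ).comp (by fun_prop) hDs
  refine le_of_forall_pos_le_add fun η hη => ?_
  obtain ⟨G, hG, hGV⟩ := exists_differentiable_re_approx hVc (η := η / 4) (by positivity)
  -- shift the approximant so that it lies strictly above `- log R`
  set H : ℂ → ℂ := fun ζ => G ζ + ((η / 2 : ℝ) : ℂ) with hH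
  have hHd : Differentiable ℂ H := hG.add_const _
  have hHre : ∀ ζ, (H ζ).re = (G ζ).re + η / 2 := fun ζ => by
    simp only [hH, Complex.add_re, Complex.ofReal_re]
  have hmean : Real.circleAverage (fun ζ => (H ζ).re) 0 1 = (H 0).re := by
    have h1 : Real.circleAverage H 0 1 = H 0 := by
      apply DiffContOnCl.circleAverage
      exact hHd.diffContOnCl
    rw [← h1]
    have hi : CircleIntegrable H 0 1 := hHd.continuous.continuousOn.circleIntegrable zero_le_one
    exact (Complex.reCLM.circleAverage_comp_comm hi)
  have hHi : CircleIntegrable (fun ζ => (H ζ).re) 0 1 :=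
    (Complex.continuous_re.comp hHd.continuous).continuousOn.circleIntegrable zero_le_one
  have hVi : CircleIntegrable (fun ζ => -Real.log (extRadius Ω (a + ζ • w))) 0 1 :=
    hVc.circleIntegrable zero_le_one
  have hlog : ∀ ζ ∈ sphere (0 : ℂ) 1, 0 ≤ -Real.log (extRadius Ω (a + ζ • w)) := fun ζ hζ =>
    neg_nonneg.2 (Real.log_nonpos (extRadius_nonneg _ _) (extRadius_le_one _ _))
  have hH0 : 0 ≤ (H 0).re := by
    rw [← hmean, ← Real.circleAverage_const (0 : ℝ) 0 1]
    refine Real.circleAverage_mono (by fun_prop) hHi fun ζ hζ => ?_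
    rw [abs_one] at hζ
    have h1 := abs_le.1 (hGV ζ hζ)
    have h2 := hlog ζ hζ
    rw [hHre]
    linarith [h1.1]
  have hkey := exp_neg_re_le_extRadius hΩ hD hHd hH0 (fun ζ hζ => by
    rw [← Real.lt_log_iff_exp_lt (extRadius_pos hΩ (hDs ζ hζ)), hHre]
    have h1 := abs_le.1 (hGV ζ hζ)
    linarith [h1.1])
  have ha : a ∈ Ω := by simpa using hD 0 (by simp)
  rw [← Real.le_log_iff_exp_le (extRadius_pos hΩ ha)] at hkey
  have hle : (H 0).re ≤
      Real.circleAverage (fun ζ => -Real.log (extRadius Ω (a + ζ • w)) + η) 0 1 := by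
    rw [← hmean]
    refine Real.circleAverage_mono hHi (hVi.add (by fun_prop)) fun ζ hζ => ?_
    rw [abs_one] at hζ
    have h1 := abs_le.1 (hGV ζ hζ)
    rw [hHre]
    linarith [h1.2]
  have hadd : Real.circleAverage (fun ζ => -Real.log (extRadius Ω (a + ζ • w)) + η) 0 1 =
      Real.circleAverage (fun ζ => -Real.log (extRadius Ω (a + ζ • w))) 0 1 + η := by
    have := Real.circleAverage_fun_add hVi (f₂ := fun _ => η) (by fun_prop)
    rw [this, Real.circleAverage_const]
  linarith

end ExtensionRadius

/-! ### Suprema of normalized logarithms -/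

section PeakFunction

variable {X : Type} [PseudoMetricSpace X]

/-- The normalized logarithm `(- log (u ε z) - ℓ - C) / ℓ`, where `ℓ = log (1 / ε)`, of a family
`u`, with `u ε z` thought of as a radius at depth `ε` below `z`. -/
noncomputable def depthLog (C : ℝ) (u : ℝ → X → ℝ) (ε : ℝ) (z : X) : ℝ :=
  (-Real.log (u ε z) - -Real.log ε - C) / -Real.log ε

/-- The supremum of the normalized logarithms over all small depths. -/
noncomputable def peakFn (C ε₀ : ℝ) (u : ℝ → X → ℝ) (z : X) : ℝ :=
  ⨆ ε : Set.Ioo (0 : ℝ) ε₀, depthLog C u ε z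

/-- The properties of the family of radii used to study `peakFn`. -/
structure DepthFamily (S : Set X) (c K ε₀ : ℝ) (u : ℝ → X → ℝ) : Prop where
  c_pos : 0 < c
  K_nonneg : 0 ≤ K
  eps_pos : 0 < ε₀
  eps_le : ε₀ ≤ Real.exp (-1)
  lower : ∀ z ∈ S, ∀ ε, 0 < ε → ε < ε₀ → c * ε ≤ u ε z
  lip : ∀ z ∈ S, ∀ z' ∈ S, ∀ ε, 0 < ε → ε < ε₀ → u ε z - K * dist z z' ≤ u ε z'
  depth : ∀ z ∈ S, ∀ ε, 0 < ε → ε < ε₀ → ∀ ε', 0 < ε' → ε' < ε₀ → u ε z - |ε - ε'| ≤ u ε' z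

namespace DepthFamily

variable {S : Set X} {c K ε₀ : ℝ} {u : ℝ → X → ℝ}

lemma one_le_neg_log (h : DepthFamily S c K ε₀ u) {ε : ℝ} (h0 : 0 < ε) (h1 : ε < ε₀) :
    1 ≤ -Real.log ε := by
  have := Real.log_le_log h0 (h1.le.trans h.eps_le)
  rw [Real.log_exp] at this
  linarith

lemma pos (h : DepthFamily S c K ε₀ u) {z : X} (hz : z ∈ S) {ε : ℝ} (h0 : 0 < ε) (h1 : ε < ε₀) :
    0 < u ε z :=
  lt_of_lt_of_le (mul_pos h.c_pos h0) (h.lower z hz ε h0 h1)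

lemma depthLog_le (h : DepthFamily S c K ε₀ u) {z : X} (hz : z ∈ S) {ε : ℝ} (h0 : 0 < ε)
    (h1 : ε < ε₀) : depthLog (1 - Real.log c) u ε z ≤ -(1 / -Real.log ε) := by
  have hl := h.one_le_neg_log h0 h1
  have h2 := Real.log_le_log (mul_pos h.c_pos h0) (h.lower z hz ε h0 h1)
  rw [Real.log_mul h.c_pos.ne' h0.ne'] at h2
  rw [depthLog, ← neg_div]
  exact div_le_div_of_nonneg_right (by linarith) (by linarith)

lemma depthLog_nonpos (h : DepthFamily S c K ε₀ u) {z : X} (hz : z ∈ S) {ε : ℝ} (h0 : 0 < ε)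
    (h1 : ε < ε₀) : depthLog (1 - Real.log c) u ε z ≤ 0 := by
  have hl := h.one_le_neg_log h0 h1
  refine (h.depthLog_le hz h0 h1).trans ?_
  rw [neg_nonpos]
  positivity

lemma bddAbove (h : DepthFamily S c K ε₀ u) {z : X} (hz : z ∈ S) :
    BddAbove (Set.range fun ε : Set.Ioo (0 : ℝ) ε₀ => depthLog (1 - Real.log c) u ε z) := by
  refine ⟨0, ?_⟩
  rintro _ ⟨ε, rfl⟩
  exact h.depthLog_nonpos hz ε.2.1 ε.2.2

lemma nonempty (h : DepthFamily S c K ε₀ u) : Nonempty (Set.Ioo (0 : ℝ) ε₀) :=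
  Set.nonempty_Ioo_subtype h.eps_pos

lemma le_peakFn (h : DepthFamily S c K ε₀ u) {z : X} (hz : z ∈ S) {ε : ℝ} (h0 : 0 < ε)
    (h1 : ε < ε₀) : depthLog (1 - Real.log c) u ε z ≤ peakFn (1 - Real.log c) ε₀ u z :=
  le_ciSup (h.bddAbove hz) (⟨ε, h0, h1⟩ : Set.Ioo (0 : ℝ) ε₀)

lemma peakFn_le (h : DepthFamily S c K ε₀ u) {z : X} {b : ℝ}
    (hb : ∀ ε, 0 < ε → ε < ε₀ → depthLog (1 - Real.log c) u ε z ≤ b) :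
    peakFn (1 - Real.log c) ε₀ u z ≤ b := by
  have := h.nonempty
  exact ciSup_le fun ε => hb ε ε.2.1 ε.2.2

lemma peakFn_nonpos (h : DepthFamily S c K ε₀ u) {z : X} (hz : z ∈ S) :
    peakFn (1 - Real.log c) ε₀ u z ≤ 0 :=
  h.peakFn_le fun _ h0 h1 => h.depthLog_nonpos hz h0 h1

/-- The supremum vanishes where the radius at each depth `ε` is at most `ε`: the normalized
logarithms are then at least a constant divided by `log ε`. -/
lemma peakFn_eq_zero (h : DepthFamily S c K ε₀ u) {z : X} (hz : z ∈ S)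
    (hu : ∀ ε, 0 < ε → ε < ε₀ → u ε z ≤ ε) : peakFn (1 - Real.log c) ε₀ u z = 0 := by
  refine le_antisymm (h.peakFn_nonpos hz) ?_
  have hlim : Tendsto (fun ε : ℝ => -(1 - Real.log c) / -Real.log ε) (𝓝[>] 0) (𝓝 0) :=
    Tendsto.const_div_atTop (tendsto_neg_atBot_atTop.comp Real.tendsto_log_nhdsGT_zero) _
  refine le_of_tendsto hlim ?_
  filter_upwards [Ioo_mem_nhdsGT h.eps_pos] with ε hε
  refine le_trans ?_ (h.le_peakFn hz hε.1 hε.2)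
  have hl := h.one_le_neg_log hε.1 hε.2
  have h2 := Real.log_le_log (h.pos hz hε.1 hε.2) (hu ε hε.1 hε.2)
  rw [depthLog]
  exact div_le_div_of_nonneg_right (by linarith) (by linarith)

/-- The supremum is negative where the radii stay away from `0` as the depth shrinks. -/
lemma peakFn_neg (h : DepthFamily S c K ε₀ u) {z : X} (hz : z ∈ S) {τ : ℝ} (hτ : 0 < τ)
    (hτ1 : τ ≤ 1) (hu : ∀ ε, 0 < ε → ε < ε₀ → τ - ε ≤ u ε z) (hc1 : c ≤ 1) :
    peakFn (1 - Real.log c) ε₀ u z < 0 := by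
  set L := -Real.log (τ / 2) with hL
  have hL0 : 0 ≤ L := neg_nonneg.2 (Real.log_nonpos (by positivity) (by linarith))
  refine lt_of_le_of_lt (b := -(1 / (L + 1))) (h.peakFn_le fun ε h0 h1 => ?_)
    (neg_lt_zero.2 (by positivity))
  have hl := h.one_le_neg_log h0 h1
  rcases le_or_gt (-Real.log ε) (L + 1) with hc | hc
  · refine (h.depthLog_le hz h0 h1).trans (neg_le_neg ?_)
    exact one_div_le_one_div_of_le (by linarith) hc
  · have hε : ε < τ / 2 := by
      rw [← Real.log_lt_log_iff h0 (by positivity)]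
      linarith
    have h2 := Real.log_le_log (show 0 < τ / 2 by positivity)
      (show τ / 2 ≤ u ε z by linarith [hu ε h0 h1])
    have hlc := Real.log_nonpos h.c_pos.le hc1
    rw [depthLog, ← neg_div, div_le_div_iff₀ (by linarith) (by linarith)]
    nlinarith

lemma continuousOn_u (h : DepthFamily S c K ε₀ u) {ε : ℝ} (h0 : 0 < ε) (h1 : ε < ε₀) :
    ContinuousOn (u ε) S := by
  refine LipschitzOnWith.continuousOn (K := K.toNNReal) (LipschitzOnWith.of_dist_le_mul ?_)
  intro x hx y hy
  rw [Real.coe_toNNReal _ h.K_nonneg, Real.dist_eq, abs_le]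
  have h2 := h.lip x hx y hy ε h0 h1
  have h3 := h.lip y hy x hx ε h0 h1
  rw [dist_comm] at h3
  constructor <;> linarith

lemma continuousOn_depthLog (h : DepthFamily S c K ε₀ u) {ε : ℝ} (h0 : 0 < ε) (h1 : ε < ε₀)
    (C : ℝ) : ContinuousOn (depthLog C u ε) S := by
  have := (h.continuousOn_u h0 h1).log fun z hz => (h.pos hz h0 h1).ne'
  unfold depthLog
  fun_prop

lemma depthLog_le_add (h : DepthFamily S c K ε₀ u) {z z' : X} (hz : z ∈ S) (hz' : z' ∈ S)
    {ε κ : ℝ} (h0 : 0 < ε) (h1 : ε < ε₀) (hκ : 0 < κ) (hzκ : κ ≤ u ε z) (C : ℝ) :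
    depthLog C u ε z ≤ depthLog C u ε z' + K / κ * dist z z' := by
  have hl := h.one_le_neg_log h0 h1
  have hp := h.pos hz h0 h1
  have hp' := h.pos hz' h0 h1
  have h2 := h.lip z' hz' z hz ε h0 h1
  rw [dist_comm] at h2
  have hd : 0 ≤ K * dist z z' := mul_nonneg h.K_nonneg dist_nonneg
  have h3 : Real.log (u ε z') - Real.log (u ε z) ≤ K / κ * dist z z' := by
    rw [← Real.log_div hp'.ne' hp.ne']
    refine (Real.log_le_sub_one_of_pos (div_pos hp' hp)).trans ?_
    have : u ε z' / u ε z - 1 = (u ε z' - u ε z) / u ε z := by field_simp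
    rw [this, div_mul_eq_mul_div]
    calc (u ε z' - u ε z) / u ε z ≤ K * dist z z' / u ε z :=
          div_le_div_of_nonneg_right (by linarith) hp.le
      _ ≤ K * dist z z' / κ := div_le_div_of_nonneg_left hd hκ hzκ
  have h4 : 0 ≤ K / κ * dist z z' := mul_nonneg (div_nonneg h.K_nonneg hκ.le) dist_nonneg
  rw [depthLog, depthLog, ← sub_le_iff_le_add', ← sub_div, div_le_iff₀ (by linarith)]
  nlinarith

/-- Continuity of the supremum. At a point where every radius is at most the depth the value is
the maximal value `0`, so lower semicontinuity suffices; elsewhere the radii are bounded below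
uniformly in the depth, and the family is equi-Lipschitz. -/
lemma continuousOn_peakFn (h : DepthFamily S c K ε₀ u) :
    ContinuousOn (peakFn (1 - Real.log c) ε₀ u) S := by
  intro q hq
  by_cases hcase : ∀ ε, 0 < ε → ε < ε₀ → u ε q ≤ ε
  · have hzero := h.peakFn_eq_zero hq hcase
    rw [ContinuousWithinAt, hzero, tendsto_order]
    constructor
    · intro b hb
      have := h.nonempty
      obtain ⟨⟨ε, h0, h1⟩, hε⟩ := exists_lt_of_lt_ciSup (hb.trans_eq hzero.symm)
      filter_upwards [(h.continuousOn_depthLog h0 h1 _ q hq).eventually (lt_mem_nhds hε),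
        self_mem_nhdsWithin] with z hz hzS
      exact lt_of_lt_of_le hz (h.le_peakFn hzS h0 h1)
    · intro b hb
      filter_upwards [self_mem_nhdsWithin] with z hz
      exact (h.peakFn_nonpos hz).trans_lt hb
  · push Not at hcase
    obtain ⟨ε₁, h0, h1, hlt⟩ := hcase
    set κ₀ := (u ε₁ q - ε₁) / 2 with hκ₀
    have hκ₀pos : 0 < κ₀ := by rw [hκ₀]; linarith
    set κ := min κ₀ (c * ε₁) with hκ
    have hκpos : 0 < κ := lt_min hκ₀pos (mul_pos h.c_pos h0)
    have hbound : ∀ z ∈ S, K * dist q z ≤ κ₀ → ∀ ε, 0 < ε → ε < ε₀ → κ ≤ u ε z := by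
      intro z hz hd ε hε0 hε1
      rcases le_or_gt ε ε₁ with hle | hgt
      · refine (min_le_left _ _).trans ?_
        have h2 := h.lip q hq z hz ε₁ h0 h1
        have h3 := h.depth z hz ε₁ h0 h1 ε hε0 hε1
        rw [abs_of_nonneg (by linarith)] at h3
        linarith
      · refine (min_le_right _ _).trans (le_trans ?_ (h.lower z hz ε hε0 hε1))
        exact mul_le_mul_of_nonneg_left hgt.le h.c_pos.le
    have hqd : K * dist q q ≤ κ₀ := by simpa using hκ₀pos.le
    have hd0 : Tendsto (fun z => dist q z) (𝓝[S] q) (𝓝 0) := by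
      have : Continuous fun z => dist q z := by fun_prop
      simpa using (this.tendsto q).mono_left nhdsWithin_le_nhds
    have hev : ∀ᶠ z in 𝓝[S] q, K * dist q z ≤ κ₀ := by
      have h2 := hd0.const_mul K
      rw [mul_zero] at h2
      exact (h2.eventually (gt_mem_nhds hκ₀pos)).mono fun _ h => h.le
    rw [ContinuousWithinAt, tendsto_iff_dist_tendsto_zero]
    refine squeeze_zero' (Eventually.of_forall fun _ => dist_nonneg) ?_
      (by simpa using hd0.const_mul (K / κ))
    filter_upwards [hev, self_mem_nhdsWithin] with z hz hzS
    rw [Real.dist_eq, abs_le]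
    constructor
    · have : peakFn (1 - Real.log c) ε₀ u q ≤
          peakFn (1 - Real.log c) ε₀ u z + K / κ * dist q z :=
        h.peakFn_le fun ε e0 e1 => (h.depthLog_le_add hq hzS e0 e1 hκpos
          (hbound q hq hqd ε e0 e1) _).trans (by linarith [h.le_peakFn hzS e0 e1])
      linarith
    · have : peakFn (1 - Real.log c) ε₀ u z ≤
          peakFn (1 - Real.log c) ε₀ u q + K / κ * dist q z :=
        h.peakFn_le fun ε e0 e1 => (h.depthLog_le_add hzS hq e0 e1 hκpos
          (hbound z hzS hz ε e0 e1) _).trans (by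
            rw [dist_comm]; linarith [h.le_peakFn hq e0 e1])
      linarith

end DepthFamily

end PeakFunction

/-! ### The cone condition and the two alternatives -/

section Cone

variable {E : Type} [NormedAddCommGroup E] [NormedSpace ℂ E] [FiniteDimensional ℂ E]

/-- A uniform interior cone condition at points of `closure Ω` near `p`: translating by `- ε • ν`
moves such a point into `Ω`, together with a ball of radius `c * ε`. -/
structure ConeAt (Ω : Set E) (p ν : E) (c δ : ℝ) : Prop where
  isOpen : IsOpen Ω
  norm_eq : ‖ν‖ = 1
  c_pos : 0 < c
  c_le : c ≤ 1
  delta_pos : 0 < δ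
  delta_le : δ ≤ 1
  cone : ∀ z ∈ closure Ω, dist z p < δ → ∀ ε : ℝ, 0 < ε → ε < δ →
    ball (z - (ε : ℂ) • ν) (c * ε) ⊆ Ω

namespace ConeAt

variable {Ω : Set E} {p ν : E} {c δ : ℝ}

lemma mem (h : ConeAt Ω p ν c δ) {z : E} (hz : z ∈ closure Ω) (hzp : dist z p < δ) {ε : ℝ}
    (h0 : 0 < ε) (h1 : ε < δ) : z - (ε : ℂ) • ν ∈ Ω :=
  h.cone z hz hzp ε h0 h1 (mem_ball_self (mul_pos h.c_pos h0))

lemma norm_translate_sub (h : ConeAt Ω p ν c δ) (z : E) (ε ε' : ℝ) :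
    ‖(z - (ε' : ℂ) • ν) - (z - (ε : ℂ) • ν)‖ = |ε - ε'| := by
  have : (z - (ε' : ℂ) • ν) - (z - (ε : ℂ) • ν) = ((ε - ε' : ℝ) : ℂ) • ν := by
    push_cast
    rw [sub_smul]
    abel
  rw [this, norm_smul, h.norm_eq, Complex.norm_real, Real.norm_eq_abs, mul_one]

lemma segment_vertical {S : Set E} {z ν : E} {ε ε' : ℝ}
    (h : ∀ s ∈ Set.uIcc ε ε', z - (s : ℂ) • ν ∈ S) :
    segment ℝ (z - (ε : ℂ) • ν) (z - (ε' : ℂ) • ν) ⊆ S := by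
  rintro _ ⟨a, b, ha, hb, hab, rfl⟩
  have h1 : a * ε + b * ε' ∈ Set.uIcc ε ε' := by
    rw [← segment_eq_uIcc]
    exact ⟨a, b, ha, hb, hab, rfl⟩
  convert h _ h1 using 1
  have hb' : b = 1 - a := by linarith
  subst hb'
  rw [← Complex.coe_smul, ← Complex.coe_smul]
  push_cast
  module

lemma segment_vertical_subset (h : ConeAt Ω p ν c δ) {z : E} (hz : z ∈ closure Ω)
    (hzp : dist z p < δ) {ε ε' : ℝ} (h0 : 0 < ε) (h1 : ε < δ) (h0' : 0 < ε') (h1' : ε' < δ) :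
    segment ℝ (z - (ε : ℂ) • ν) (z - (ε' : ℂ) • ν) ⊆ Ω :=
  segment_vertical fun _ hs => h.mem hz hzp (lt_of_lt_of_le (lt_min h0 h0') hs.1)
    (lt_of_le_of_lt hs.2 (max_lt h1 h1'))

lemma segment_horizontal_subset (h : ConeAt Ω p ν c δ) {z z' : E} (hz : z ∈ closure Ω)
    (hzp : dist z p < δ) {ε : ℝ} (h0 : 0 < ε) (h1 : ε < δ) (hd : dist z' z < c * ε) :
    segment ℝ (z - (ε : ℂ) • ν) (z' - (ε : ℂ) • ν) ⊆ Ω := by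
  refine ((convex_ball (z - (ε : ℂ) • ν) (c * ε)).segment_subset
    (mem_ball_self (mul_pos h.c_pos h0)) ?_).trans (h.cone z hz hzp ε h0 h1)
  rwa [mem_ball, dist_sub_right]

lemma segment_to_interior_subset (h : ConeAt Ω p ν c δ) {z : E} (hz : z ∈ Ω)
    (hzp : dist z p < δ) {ε : ℝ} (h0 : 0 < ε) (h1 : ε < δ) :
    segment ℝ (z - (ε : ℂ) • ν) z ⊆ Ω := by
  have := segment_vertical (S := Ω) (z := z) (ν := ν) (ε := ε) (ε' := 0) (fun s hs => by
    rw [Set.uIcc_of_ge h0.le] at hs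
    rcases hs.1.eq_or_lt with h | h'
    · simpa [← h] using hz
    · exact h.mem (subset_closure hz) hzp h' (lt_of_le_of_lt hs.2 h1))
  simpa using this

lemma le_extRadius_translate (h : ConeAt Ω p ν c δ) {z : E} (hz : z ∈ closure Ω)
    (hzp : dist z p < δ) {ε : ℝ} (h0 : 0 < ε) (h1 : ε < δ) :
    c / (2 * Real.exp 1) * ε ≤ extRadius Ω (z - (ε : ℂ) • ν) := by
  have hpos : 0 < c * ε := mul_pos h.c_pos h0
  have hle : c * ε ≤ 1 := mul_le_one₀ h.c_le h0.le (h1.le.trans h.delta_le)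
  have h2 := le_extRadius_of_closedBall h.isOpen (s := c * ε / 2) (by positivity) (by linarith)
    ((closedBall_subset_ball (by linarith)).trans (h.cone z hz hzp ε h0 h1))
  refine le_trans (le_of_eq ?_) h2
  field_simp

lemma extRadius_vertical (h : ConeAt Ω p ν c δ) {z : E} (hz : z ∈ closure Ω)
    (hzp : dist z p < δ) {ε ε' : ℝ} (h0 : 0 < ε) (h1 : ε < δ) (h0' : 0 < ε') (h1' : ε' < δ) :
    extRadius Ω (z - (ε : ℂ) • ν) - |ε - ε'| ≤ extRadius Ω (z - (ε' : ℂ) • ν) := by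
  rw [← h.norm_translate_sub z]
  have hseg := h.segment_vertical_subset hz hzp h0 h1 h0' h1'
  exact extRadius_sub_le h.isOpen hseg

/-- The radii at a fixed depth are Lipschitz, uniformly in the depth: descend by `dist z z' / c`
below the two points, move sideways inside a ball provided by the cone condition, and climb
back. -/
lemma extRadius_lipschitz (h : ConeAt Ω p ν c δ) {z z' : E} (hz : z ∈ closure Ω)
    (hz' : z' ∈ closure Ω) (hzp : dist z p < δ) (hzp' : dist z' p < δ) {ε : ℝ} (h0 : 0 < ε)
    (h1 : ε + dist z z' / c < δ) :
    extRadius Ω (z - (ε : ℂ) • ν) - (1 + 2 / c) * dist z z' ≤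
      extRadius Ω (z' - (ε : ℂ) • ν) := by
  have hc := h.c_pos
  set s := dist z z' / c with hs
  have hs0 : 0 ≤ s := div_nonneg dist_nonneg hc.le
  have hsc : c * s = dist z z' := by rw [hs]; field_simp
  have e1 := h.extRadius_vertical hz hzp h0 (by linarith) (ε' := ε + s) (by linarith) h1
  have e3 := h.extRadius_vertical hz' hzp' (ε := ε + s) (by linarith) h1 h0 (by linarith)
  have e2 := extRadius_sub_le h.isOpen (h.segment_horizontal_subset hz hzp (z' := z')
    (ε := ε + s) (by linarith) h1 (by rw [dist_comm, mul_add, hsc]; nlinarith [mul_pos hc h0]))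
  rw [← dist_eq_norm, dist_sub_right, dist_comm] at e2
  rw [show ε - (ε + s) = -s by ring, abs_neg, abs_of_nonneg hs0] at e1
  rw [show ε + s - ε = s by ring, abs_of_nonneg hs0] at e3
  have : (1 + 2 / c) * dist z z' = dist z z' + 2 * s := by rw [hs]; ring
  linarith

/-- If the extension radius at some `p - ε • ν` exceeds `ε`, all holomorphic functions on `Ω`
extend to the union of `Ω` and a fixed ball around `p`. -/
lemma exists_extension (h : ConeAt Ω p ν c δ) (hconn : IsConnected Ω) (hp : p ∈ closure Ω)
    {ε : ℝ} (h0 : 0 < ε) (h1 : ε < δ) (hR : ε < extRadius Ω (p - (ε : ℂ) • ν)) :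
    ∃ Ω' : Set E, IsOpen Ω' ∧ IsConnected Ω' ∧ Ω ∪ {p} ⊆ Ω' ∧
      ∀ f : E → ℂ, DifferentiableOn ℂ f Ω →
        ∃ g : E → ℂ, DifferentiableOn ℂ g Ω' ∧ Set.EqOn f g Ω := by
  classical
  set R := extRadius Ω (p - (ε : ℂ) • ν) with hRdef
  set η := min (R - ε) (min (c * ε) δ) with hη
  have hη0 : 0 < η := lt_min (by linarith) (lt_min (mul_pos h.c_pos h0) h.delta_pos)
  have hR0 : 0 < R := h0.trans hR
  refine ⟨Ω ∪ ball p η, h.isOpen.union isOpen_ball, ?_, ?_, fun f hf => ?_⟩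
  · have hne : (Ω ∩ ball p η).Nonempty := by
      obtain ⟨y, hy1, hy2⟩ := mem_closure_iff.1 hp _ isOpen_ball (mem_ball_self hη0)
      exact ⟨y, hy2, hy1⟩
    exact hconn.union hne ⟨⟨p, mem_ball_self hη0⟩, (convex_ball p η).isPreconnected⟩
  · refine Set.union_subset_union_right _ ?_
    rw [Set.singleton_subset_iff]
    exact mem_ball_self hη0
  set z := p - (ε : ℂ) • ν with hz
  set S : E → ℂ := fun y => (taylorAt f z).sum (y - z) with hS
  have hrad : ENNReal.ofReal R ≤ (taylorAt f z).radius := ofReal_extRadius_le hf z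
  have hpp : dist p p < δ := by simpa using h.delta_pos
  have hzΩ : z ∈ Ω := h.mem hp hpp h0 h1
  have hball : ball p η ⊆ ball z R := by
    apply ball_subset_ball'
    have : dist p z = ε := by
      rw [hz, dist_eq_norm, sub_sub_cancel, norm_smul, h.norm_eq, Complex.norm_real,
        Real.norm_eq_abs, abs_of_pos h0, mul_one]
    linarith [min_le_left (R - ε) (min (c * ε) δ)]
  have hSd : DifferentiableOn ℂ S (ball z R) :=
    (analyticOnNhd_taylorAt_sum hR0 hrad).differentiableOn
  have hagree : ∀ y ∈ Ω ∩ ball p η, S y = f y := by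
    rintro y ⟨hyΩ, hy⟩
    have hyc : dist y p < c * ε := lt_of_lt_of_le hy
      ((min_le_right _ _).trans (min_le_left _ _))
    have hyδ : dist y p < δ := lt_of_lt_of_le hy
      ((min_le_right _ _).trans (min_le_right _ _))
    have hmid : y - (ε : ℂ) • ν ∈ ball z R := by
      rw [mem_ball, hz, dist_sub_right]
      have : dist y p < η := hy
      linarith [min_le_left (R - ε) (min (c * ε) δ)]
    have e1 := taylorAt_sum_eventuallyEq_of_segment h.isOpen hf hR0 hrad
      (h.segment_horizontal_subset hp hpp h0 h1 hyc) (mem_ball_self hR0) hmid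
      (taylorAt_sum_eventuallyEq h.isOpen hf hzΩ)
    exact (taylorAt_sum_eventuallyEq_of_segment h.isOpen hf hR0 hrad
      (h.segment_to_interior_subset hyΩ hyδ h0 h1) hmid (hball hy) e1).self_of_nhds
  refine ⟨fun y => if y ∈ Ω then f y else S y, ?_, fun y hy => by simp [hy]⟩
  rintro y (hy | hy) <;> apply DifferentiableAt.differentiableWithinAt
  · refine (hf.differentiableAt (h.isOpen.mem_nhds hy)).congr_of_eventuallyEq ?_
    filter_upwards [h.isOpen.mem_nhds hy] with x hx
    simp [hx]
  · refine (hSd.differentiableAt (isOpen_ball.mem_nhds (hball hy))).congr_of_eventuallyEq ?_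
    filter_upwards [isOpen_ball.mem_nhds hy] with x hx
    by_cases hxΩ : x ∈ Ω
    · simp [hxΩ, hagree x ⟨hxΩ, hx⟩]
    · simp [hxΩ]

lemma depthFamily (h : ConeAt Ω p ν c δ) :
    DepthFamily (ball p (c * δ / 8) ∩ closure Ω) (c / (2 * Real.exp 1)) (1 + 2 / c)
      (min (δ / 2) (Real.exp (-1))) (fun ε z => extRadius Ω (z - (ε : ℂ) • ν)) := by
  have hc := h.c_pos
  have hδ := h.delta_pos
  have hcδ : c * δ ≤ δ := by nlinarith [h.c_le]
  have hlt : ∀ {ε : ℝ}, ε < min (δ / 2) (Real.exp (-1)) → ε < δ / 2 :=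
    fun h => h.trans_le (min_le_left _ _)
  have hS : ∀ {z}, z ∈ ball p (c * δ / 8) ∩ closure Ω → dist z p < δ := fun {z} hz => by
    have : dist z p < c * δ / 8 := hz.1
    linarith
  refine ⟨by positivity, by positivity, lt_min (by positivity) (Real.exp_pos _),
    min_le_right _ _, ?_, ?_, ?_⟩
  · intro z hz ε h0 h1
    exact h.le_extRadius_translate hz.2 (hS hz) h0 (by linarith [hlt h1])
  · intro z hz z' hz' ε h0 h1
    refine h.extRadius_lipschitz hz.2 hz'.2 (hS hz) (hS hz') h0 ?_
    have h2 : dist z z' < c * δ / 4 := by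
      have e1 : dist z p < c * δ / 8 := hz.1
      have e2 : dist z' p < c * δ / 8 := hz'.1
      linarith [dist_triangle_right z z' p]
    have h3 : dist z z' / c < δ / 4 := by
      rw [div_lt_iff₀ hc]
      linarith
    linarith [hlt h1]
  · intro z hz ε h0 h1 ε' h0' h1'
    have hδ' : ε' < δ := by linarith [hlt h1']
    refine h.extRadius_vertical hz.2 (hS hz) h0 ?_ h0' hδ'
    linarith [hlt h1]

/-- The supremum of the normalized logarithms inherits from `- log R` the sub-mean-value
inequality on small discs. -/
lemma peakFn_le_circleAverage (h : ConeAt Ω p ν c δ) {a w : E}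
    (ha : ∀ ζ : ℂ, ‖ζ‖ ≤ 1 → a + ζ • w ∈ ball p (c * δ / 8) ∩ Ω) :
    peakFn (1 - Real.log (c / (2 * Real.exp 1))) (min (δ / 2) (Real.exp (-1)))
        (fun ε z => extRadius Ω (z - (ε : ℂ) • ν)) a ≤
      Real.circleAverage (fun ζ =>
        peakFn (1 - Real.log (c / (2 * Real.exp 1))) (min (δ / 2) (Real.exp (-1)))
          (fun ε z => extRadius Ω (z - (ε : ℂ) • ν)) (a + ζ • w)) 0 1 := by
  have hF := h.depthFamily
  have hc := h.c_pos
  have hδ := h.delta_pos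
  have hcδ : c * δ ≤ δ := by nlinarith [h.c_le]
  have hS : ∀ ζ : ℂ, ‖ζ‖ ≤ 1 → a + ζ • w ∈ ball p (c * δ / 8) ∩ closure Ω := fun ζ hζ =>
    ⟨(ha ζ hζ).1, subset_closure (ha ζ hζ).2⟩
  have hSs : ∀ ζ ∈ sphere (0 : ℂ) 1, a + ζ • w ∈ ball p (c * δ / 8) ∩ closure Ω := fun ζ hζ =>
    hS ζ (mem_sphere_zero_iff_norm.1 hζ).le
  have hcomp : ContinuousOn (fun ζ : ℂ => a + ζ • w) (sphere 0 1) := by fun_prop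
  refine hF.peakFn_le fun ε h0 h1 => ?_
  have hl := hF.one_le_neg_log h0 h1
  have h1δ : ε < δ := by linarith [h1.trans_le (min_le_left _ _)]
  have hρi := (hF.continuousOn_peakFn.comp hcomp hSs).circleIntegrable zero_le_one
  have hfi := ((hF.continuousOn_depthLog h0 h1
    (1 - Real.log (c / (2 * Real.exp 1)))).comp hcomp hSs).circleIntegrable zero_le_one
  refine le_trans ?_ (Real.circleAverage_mono hfi hρi fun ζ hζ => ?_)
  swap
  · rw [abs_one] at hζ
    exact hF.le_peakFn (hSs ζ hζ) h0 h1
  have hcomm : ∀ ζ : ℂ, a - (ε : ℂ) • ν + ζ • w = a + ζ • w - (ε : ℂ) • ν := fun ζ => by abel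
  have hkey := neg_log_extRadius_le_circleAverage h.isOpen (a := a - (ε : ℂ) • ν) (w := w)
    (fun ζ hζ => by
      rw [hcomm]
      refine h.mem (hS ζ hζ).2 ?_ h0 h1δ
      have : dist (a + ζ • w) p < c * δ / 8 := (hS ζ hζ).1
      linarith)
  simp only [hcomm] at hkey
  have hui : CircleIntegrable
      (fun ζ : ℂ => -Real.log (extRadius Ω (a + ζ • w - (ε : ℂ) • ν))) 0 1 :=
    (((((hF.continuousOn_u h0 h1).log
      fun z hz => (hF.pos hz h0 h1).ne')).comp hcomp hSs).neg).circleIntegrable zero_le_one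
  -- the normalized logarithm is an affine function of `- log R`
  set C := 1 - Real.log (c / (2 * Real.exp 1)) with hC
  have haff : ∀ z, depthLog C (fun ε z => extRadius Ω (z - (ε : ℂ) • ν)) ε z =
      (-Real.log ε)⁻¹ • (-Real.log (extRadius Ω (z - (ε : ℂ) • ν))) +
        (-(-Real.log ε) - C) / -Real.log ε := fun z => by
    rw [depthLog, smul_eq_mul]
    ring
  have havg : Real.circleAverage
      (fun ζ : ℂ => depthLog C (fun ε z => extRadius Ω (z - (ε : ℂ) • ν)) ε (a + ζ • w)) 0 1 =
      (-Real.log ε)⁻¹ • Real.circleAverage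
        (fun ζ : ℂ => -Real.log (extRadius Ω (a + ζ • w - (ε : ℂ) • ν))) 0 1 +
        (-(-Real.log ε) - C) / -Real.log ε := by
    simp only [haff]
    rw [Real.circleAverage_fun_add (hui.const_fun_smul) (by fun_prop),
      Real.circleAverage_fun_smul, Real.circleAverage_const]
  change _ ≤ Real.circleAverage
    (fun ζ : ℂ => depthLog C (fun ε z => extRadius Ω (z - (ε : ℂ) • ν)) ε (a + ζ • w)) 0 1
  rw [havg, haff, smul_eq_mul, smul_eq_mul]
  have : 0 ≤ (-Real.log ε)⁻¹ := inv_nonneg.2 (by linarith)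
  gcongr

/-- If no extension radius at `p - ε • ν` exceeds `ε`, there is a local plurisubharmonic peak
function at `p`. -/
lemma exists_peak (h : ConeAt Ω p ν c δ) (hp : p ∈ closure Ω)
    (hR : ∀ ε : ℝ, 0 < ε → ε < δ → extRadius Ω (p - (ε : ℂ) • ν) ≤ ε) :
    ∃ (U : Set E) (ρ : E → ℝ), IsOpen U ∧ p ∈ U ∧ ContinuousOn ρ (U ∩ closure Ω) ∧
      (∀ z ∈ U ∩ Ω, ρ z < 0) ∧
      (∀ a ∈ U ∩ Ω, ∀ w : E, ∃ T > (0 : ℝ), ∀ t : ℝ, 0 < t → t < T →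
        ρ a ≤ (1 / (2 * Real.pi)) * ∫ θ in (0 : ℝ)..(2 * Real.pi),
          ρ (a + ((t : ℂ) * Complex.exp ((θ : ℂ) * Complex.I)) • w)) ∧ ρ p = 0 := by
  have hF := h.depthFamily
  have hc := h.c_pos
  have hδ := h.delta_pos
  have hcδ : c * δ ≤ δ := by nlinarith [h.c_le]
  have hlt : ∀ {ε : ℝ}, ε < min (δ / 2) (Real.exp (-1)) → ε < δ := fun h => by
    linarith [h.trans_le (min_le_left _ _)]
  have hpU : p ∈ ball p (c * δ / 8) := mem_ball_self (by positivity)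
  have hopen : IsOpen (ball p (c * δ / 8) ∩ Ω) := isOpen_ball.inter h.isOpen
  refine ⟨ball p (c * δ / 8), _, isOpen_ball, hpU, hF.continuousOn_peakFn, ?_, ?_,
    hF.peakFn_eq_zero ⟨hpU, hp⟩ fun ε h0 h1 => hR ε h0 (hlt h1)⟩
  · intro z hz
    have hzp : dist z p < c * δ / 8 := hz.1
    refine hF.peakFn_neg ⟨hz.1, subset_closure hz.2⟩ (extRadius_pos h.isOpen hz.2)
      (extRadius_le_one Ω z) (fun ε h0 h1 => ?_) ?_
    · have hseg := h.segment_to_interior_subset hz.2 (by linarith) h0 (hlt h1)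
      rw [segment_symm] at hseg
      have h2 := extRadius_sub_le h.isOpen hseg
      rwa [sub_sub_cancel_left, norm_neg, norm_smul, h.norm_eq, Complex.norm_real,
        Real.norm_eq_abs, abs_of_pos h0, mul_one] at h2
    · rw [div_le_one (by positivity)]
      linarith [h.c_le, Real.one_le_exp (zero_le_one' ℝ)]
  · intro a ha w
    obtain ⟨η, hη, hball⟩ := Metric.isOpen_iff.1 hopen a ha
    refine ⟨η / (‖w‖ + 1), by positivity, fun t ht0 ht => ?_⟩
    rw [lt_div_iff₀ (by positivity)] at ht
    have hD := h.peakFn_le_circleAverage (a := a) (w := (t : ℂ) • w) (fun ζ hζ => hball (by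
      rw [mem_ball, dist_eq_norm, add_sub_cancel_left, norm_smul, norm_smul, Complex.norm_real,
        Real.norm_eq_abs, abs_of_pos ht0]
      have : ‖ζ‖ * (t * ‖w‖) ≤ 1 * (t * ‖w‖) := by gcongr
      linarith))
    have hθ : ∀ θ : ℝ, circleMap 0 1 θ • ((t : ℂ) • w) =
        ((t : ℂ) * Complex.exp ((θ : ℂ) * Complex.I)) • w := fun θ => by
      rw [circleMap, smul_smul, Complex.ofReal_one, one_mul, zero_add, mul_comm (t : ℂ)]
    rw [Real.circleAverage, smul_eq_mul, ← one_div] at hD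
    simp only [hθ] at hD
    exact hD

end ConeAt

end Cone

/-! ### Lipschitz domains -/

section Lipschitz

/-- The subgraph description of a Lipschitz domain gives the cone condition in the direction in
which the imaginary part of the distinguished coordinate increases. -/
lemma exists_coneAt {m : ℕ} {Ω : Set (EuclideanSpace ℂ (Fin m))} (hΩ : IsOpen Ω)
    (hlip : HasLipschitzBoundary Ω) {p : EuclideanSpace ℂ (Fin m)} (hp : p ∈ frontier Ω) :
    ∃ ν c δ, ConeAt Ω p ν c δ := by
  obtain ⟨A, b, C, r, i, W, hW, hpW, hr, hinv, hmem⟩ := hlip p hp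
  obtain ⟨η, hη, hball⟩ := Metric.isOpen_iff.1 hW p hpW
  set e : EuclideanSpace ℂ (Fin m) := EuclideanSpace.single i Complex.I with he
  have hnorm : ‖A.symm e‖ = 1 := by
    rw [LinearIsometryEquiv.norm_map, he, PiLp.norm_single, Complex.norm_I]
  have hC : (0 : ℝ) ≤ C := C.2
  have hc1 : (1 : ℝ) / (1 + C) ≤ 1 := by
    rw [div_le_one (by positivity)]
    linarith
  have hle : ∀ z ∈ closure Ω, z ∈ W → ((A z + b) i).im ≤ r (A z + b) := by
    intro z hz hzW
    have h1 : Continuous fun z => ((A z + b) i).im := by fun_prop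
    have h2 : Continuous fun z => r (A z + b) := hr.continuous.comp (by fun_prop)
    have hcl : IsClosed {z | ((A z + b) i).im ≤ r (A z + b)} := isClosed_le h1 h2
    have hz' : z ∈ closure (W ∩ Ω) := hW.inter_closure ⟨hzW, hz⟩
    exact closure_minimal (fun y hy => ((hmem y hy.1).1 hy.2).le) hcl hz'
  refine ⟨A.symm e, 1 / (1 + C), min 1 (η / 4), hΩ, hnorm, by positivity, hc1,
    lt_min one_pos (by positivity), min_le_left _ _, fun z hz hzp ε h0 h1 y hy => ?_⟩
  have hzη : dist z p < η / 4 := hzp.trans_le (min_le_right _ _)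
  have hεη : ε < η / 4 := h1.trans_le (min_le_right _ _)
  have hzW : z ∈ W := hball (by rw [mem_ball]; linarith)
  rw [mem_ball] at hy
  have hyz : dist (z - (ε : ℂ) • A.symm e) z = ε := by
    rw [dist_eq_norm, sub_sub_cancel_left, norm_neg, norm_smul, hnorm, Complex.norm_real,
      Real.norm_eq_abs, abs_of_pos h0, mul_one]
  have hcε : 1 / (1 + (C : ℝ)) * ε ≤ ε := by nlinarith
  have hyW : y ∈ W := hball (by
    rw [mem_ball]
    linarith [dist_triangle y (z - (ε : ℂ) • A.symm e) z, dist_triangle y z p])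
  rw [hmem y hyW]
  -- compare `y` with `x = z - ε • ν`, whose image differs from that of `z` in one imaginary part
  set x := z - (ε : ℂ) • A.symm e with hx
  have hAx : A x + b = A z + b - (ε : ℂ) • e := by
    rw [hx, map_sub, map_smul, LinearIsometryEquiv.apply_symm_apply]
    abel
  have hxi : ((A x + b) i).im = ((A z + b) i).im - ε := by
    rw [hAx]
    simp [he]
  have hrx : r (A x + b) = r (A z + b) := by
    apply hinv
    · intro j hj
      rw [hAx]
      simp [he, hj]
    · rw [hAx]
      simp [he]
  have hdist : dist (A y + b) (A x + b) = dist y x := by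
    rw [dist_add_right, LinearIsometryEquiv.dist_map]
  have hry : r (A x + b) - C * dist y x ≤ r (A y + b) := by
    have h2 := hr.dist_le_mul (A y + b) (A x + b)
    rw [hdist, Real.dist_eq, abs_le] at h2
    linarith [h2.1]
  have him : ((A y + b) i).im ≤ ((A x + b) i).im + dist y x := by
    have h2 : ‖(A y + b - (A x + b)) i‖ ≤ dist y x := by
      rw [← hdist, dist_eq_norm]
      exact PiLp.norm_apply_le _ i
    have h3 := (Complex.abs_im_le_norm ((A y + b - (A x + b)) i)).trans h2
    have h4 : ((A y + b - (A x + b)) i).im = ((A y + b) i).im - ((A x + b) i).im := by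
      rw [PiLp.sub_apply, Complex.sub_im]
    rw [h4] at h3
    linarith [(abs_le.1 h3).2]
  have hfin : (1 + (C : ℝ)) * dist y x < ε := by
    rw [one_div_mul_eq_div, lt_div_iff₀ (by positivity)] at hy
    linarith
  linarith [hle z hz hzW]

end Lipschitz

/-- **Theorem 1.3.** For a bounded domain `Ω ⊆ ℂ^m` with Lipschitz boundary and a boundary
point `p`, either `p` lies in the (schlicht part of the) envelope of holomorphy of `Ω`, or
`p` lies in a local peak set for plurisubharmonic functions. -/
theorem boundary_point_envelope_or_peak {m : ℕ} (Ω : Set (EuclideanSpace ℂ (Fin m)))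
    (hΩopen : IsOpen Ω) (hΩconn : IsConnected Ω) (hΩbdd : Bornology.IsBounded Ω)
    (hΩlip : HasLipschitzBoundary Ω)
    (p : EuclideanSpace ℂ (Fin m)) (hp : p ∈ frontier Ω) :
    (∃ Ω' : Set (EuclideanSpace ℂ (Fin m)), IsOpen Ω' ∧ IsConnected Ω' ∧
        Ω ∪ {p} ⊆ Ω' ∧
        ∀ f : EuclideanSpace ℂ (Fin m) → ℂ, DifferentiableOn ℂ f Ω →
          ∃ g : EuclideanSpace ℂ (Fin m) → ℂ, DifferentiableOn ℂ g Ω' ∧ Set.EqOn f g Ω) ∨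
    (∃ (U : Set (EuclideanSpace ℂ (Fin m))) (ρ : EuclideanSpace ℂ (Fin m) → ℝ),
        IsOpen U ∧ p ∈ U ∧ ContinuousOn ρ (U ∩ closure Ω) ∧
        (∀ z ∈ U ∩ Ω, ρ z < 0) ∧ PlurisubharmonicOn ρ (U ∩ Ω) ∧ ρ p = 0) := by
  obtain ⟨ν, c, δ, h⟩ := exists_coneAt hΩopen hΩlip hp
  have hpc : p ∈ closure Ω := frontier_subset_closure hp
  by_cases hR : ∀ ε : ℝ, 0 < ε → ε < δ → extRadius Ω (p - (ε : ℂ) • ν) ≤ ε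
  · obtain ⟨U, ρ, hU, hpU, hcont, hneg, hmean, hzero⟩ := h.exists_peak hpc hR
    exact Or.inr ⟨U, ρ, hU, hpU, hcont, hneg,
      ⟨(hcont.mono (Set.inter_subset_inter_right _ subset_closure)).upperSemicontinuousOn,
        hmean⟩, hzero⟩
  · push Not at hR
    obtain ⟨ε, h0, h1, hlt⟩ := hR
    exact Or.inl (h.exists_extension hΩconn hpc h0 h1 hlt)
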